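/- Let p, q > 0, a ∈ ℝ and λ ≥ −a²/2, and let h be a strictly positive C² function on ℝ³ with Δ_a h = λ·h, where Δ_a is the Laplacian with vertical drift a on Sol(p,q). Then there exist nonnegative C² functions h₁, h₂ : ℝ² → ℝ with Δ^{H(p)}_a h₁ = λ·h₁ and Δ^{H(q)}_{−a} h₂ = λ·h₂, such that h(x,y,z) = h₁(x,z) + h₂(y,−z) for all (x,y,z) ∈ ℝ³. -/

import Mathlib

open Real

/-- The Laplacian with vertical drift `a` on `Sol(p,q) ≡ ℝ³`:
`Δ_a f = (1/2)(e^{2pz} f_xx + e^{−2qz} f_yy + f_zz) + a f_z`. -/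
noncomputable def solLap (p q a : ℝ) (f : ℝ × ℝ × ℝ → ℝ) (w : ℝ × ℝ × ℝ) : ℝ :=
  (1/2) * (Real.exp (2*p*w.2.2) * iteratedDeriv 2 (fun t => f (t, w.2.1, w.2.2)) w.1
    + Real.exp (-(2*q*w.2.2)) * iteratedDeriv 2 (fun t => f (w.1, t, w.2.2)) w.2.1
    + iteratedDeriv 2 (fun t => f (w.1, w.2.1, t)) w.2.2)
  + a * deriv (fun t => f (w.1, w.2.1, t)) w.2.2

/-- The hyperbolic Laplacian with drift `b` on the logarithmic model `H(r) ≡ ℝ²`: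
`Δ^{H(r)}_b g = (1/2)(e^{2rz} g_xx + g_zz) + b g_z`. -/
noncomputable def hypLap (r b : ℝ) (g : ℝ × ℝ → ℝ) (w : ℝ × ℝ) : ℝ :=
  (1/2) * (Real.exp (2*r*w.2) * iteratedDeriv 2 (fun t => g (t, w.2)) w.1
    + iteratedDeriv 2 (fun t => g (w.1, t)) w.2)
  + b * deriv (fun t => g (w.1, t)) w.2

/-- Membership in `H⁺(Δ_a, λ)` on `Sol(p,q)`: strictly positive `C²` `λ`-eigenfunction. -/
def IsSolEigen (p q a lam : ℝ) (h : ℝ × ℝ × ℝ → ℝ) : Prop :=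
  ContDiff ℝ 2 h ∧ (∀ w, 0 < h w) ∧ ∀ w, solLap p q a h w = lam * h w

/-- A minimal element of `H⁺(Δ_a, λ)` on `Sol(p,q)`: value `1` at the origin, and any
element of `H⁺(Δ_a, λ)` dominated by it is a constant multiple of it. -/
def IsSolMinimal (p q a lam : ℝ) (h : ℝ × ℝ × ℝ → ℝ) : Prop :=
  IsSolEigen p q a lam h ∧ h (0, 0, 0) = 1 ∧
    ∀ f, IsSolEigen p q a lam f → (∀ w, f w ≤ h w) → ∃ c : ℝ, ∀ w, f w = c * h w

/-- Membership in `H⁺(Δ^{H(r)}_b, λ)`: strictly positive `C²` `λ`-eigenfunction. -/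
def IsHypEigen (r b lam : ℝ) (g : ℝ × ℝ → ℝ) : Prop :=
  ContDiff ℝ 2 g ∧ (∀ w, 0 < g w) ∧ ∀ w, hypLap r b g w = lam * g w

/-- A minimal element of `H⁺(Δ^{H(r)}_b, λ)`. -/
def IsHypMinimal (r b lam : ℝ) (g : ℝ × ℝ → ℝ) : Prop :=
  IsHypEigen r b lam g ∧ g (0, 0) = 1 ∧
    ∀ f, IsHypEigen r b lam f → (∀ w, f w ≤ g w) → ∃ c : ℝ, ∀ w, f w = c * g w

/-!
Multiplying by `e^{az}` removes the drift, so let `u > 0` solve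
`e^{2pz} u_xx + e^{-2qz} u_yy + u_zz = k u` with `k ≥ 0`. A barrier argument gives a Harnack
inequality and hence, as the left translations of `Sol(p,q)` preserve the equation, a bound of the
logarithmic gradient of `u` in the left-invariant frame. Along this frame `∂/∂x` is expanded by
`e^{pz}` and `∂/∂y` by `e^{-qz}`, so `u` becomes independent of `x` as `z → +∞` and of `y` as
`z → -∞`, up to relatively small errors. Therefore every second difference of `u` in `x` and `y`
is negligible at both ends compared with the positive solution made of its four corner values; as
solutions grow subexponentially on slabs, the Phragmén–Lindelöf principle shows that it vanishes,
so `u = A(x,z) + B(y,z)`. A function of `z` can be moved from one summand to the other to make both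
of them solutions. Finally `-B ≤ A`, and by compactness some solution depending on `z` only lies in
between; subtracting it from `A` and adding it to `B` makes both summands nonnegative.
-/

open Set Filter Topology

/-! ### Calculus on the line -/

section Line

variable {f f' : ℝ → ℝ}

lemma iteratedDeriv_two_nonpos_of_isLocalMax {t : ℝ} (h : IsLocalMax f t)
    (hc : ContinuousAt f t) : iteratedDeriv 2 f t ≤ 0 := by
  by_contra! hpos
  have hmin : IsLocalMin f t := isLocalMin_of_deriv_deriv_pos
    (by simpa [iteratedDeriv_succ, iteratedDeriv_zero] using hpos) h.deriv_eq_zero hc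
  have hconst : f =ᶠ[𝓝 t] fun _ => f t := by
    filter_upwards [h, hmin] with s h₁ h₂ using le_antisymm h₁ h₂
  rw [hconst.iteratedDeriv_eq 2] at hpos
  simp [iteratedDeriv_const] at hpos

lemma iteratedDeriv_two_eq_of_hasDerivAt {f'' t : ℝ} (h₁ : ∀ s, HasDerivAt f (f' s) s)
    (h₂ : HasDerivAt f' f'' t) : iteratedDeriv 2 f t = f'' := by
  rw [iteratedDeriv_succ, iteratedDeriv_one, funext fun s => (h₁ s).deriv, h₂.deriv]

lemma iteratedDeriv_two_comp_affine (hf : ContDiff ℝ 2 f) (a s t : ℝ) :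
    iteratedDeriv 2 (fun r => f (s + a * r)) t = a ^ 2 * iteratedDeriv 2 f (s + a * t) := by
  rw [iteratedDeriv_comp_const_mul (f := fun r => f (s + r)) (by push_cast; fun_prop) a,
    iteratedDeriv_comp_const_add 2 f s]

lemma le_mul_exp_of_abs_deriv_le {c : ℝ} (hf : Differentiable ℝ f) (hpos : ∀ t, 0 < f t)
    (hd : ∀ t, |deriv f t| ≤ c * f t) (s t : ℝ) : f t ≤ f s * exp (c * |t - s|) := by
  have hlip : |log (f t) - log (f s)| ≤ c * |t - s| :=
    convex_univ.norm_image_sub_le_of_norm_deriv_le (f := fun r => log (f r))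
      (fun r _ => (hf r).log (hpos r).ne')
      (fun r _ => by
        rw [deriv.log (hf r) (hpos r).ne', norm_eq_abs, abs_div, abs_of_pos (hpos r),
          div_le_iff₀ (hpos r)]
        exact hd r) (mem_univ _) (mem_univ _)
  have hlog : log (f t) ≤ log (f s) + c * |t - s| := by
    linarith [(le_abs_self _).trans hlip]
  rw [← exp_log (hpos t), ← exp_log (hpos s), ← exp_add]
  exact exp_le_exp.2 hlog

lemma abs_deriv_le_of_abs_iteratedDeriv_two_le {t d M B : ℝ} (hf : ContDiff ℝ 2 f) (hd : 0 < d)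
    (hM : ∀ s, |s - t| ≤ d → |f s| ≤ M) (hB : ∀ s, |s - t| ≤ d → |iteratedDeriv 2 f s| ≤ B) :
    |deriv f t| ≤ 2 * M / d + B * d := by
  have hf1 : Differentiable ℝ f := hf.differentiable (by norm_num)
  obtain ⟨c, hc, hc'⟩ := exists_deriv_eq_slope f (show t < t + d by linarith)
    hf1.continuous.continuousOn hf1.differentiableOn
  have hct : |c - t| ≤ d := by rw [abs_of_pos (by linarith [hc.1])]; linarith [hc.2]
  have hslope : |deriv f c| ≤ 2 * M / d := by
    rw [hc', add_sub_cancel_left, abs_div, abs_of_pos hd]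
    gcongr
    linarith [abs_sub (f (t + d)) (f t), hM (t + d) (by simp [abs_of_pos hd]),
      hM t (by simp [hd.le])]
  have hlip : |deriv f t - deriv f c| ≤ B * |t - c| :=
    (convex_closedBall t d).norm_image_sub_le_of_norm_deriv_le
      (fun r _ => hf.differentiable_deriv_two r)
      (fun r hr => by simpa [iteratedDeriv_succ, iteratedDeriv_zero] using hB r hr)
      hct (Metric.mem_closedBall_self hd.le)
  have hB0 : 0 ≤ B := (abs_nonneg _).trans (hB t (by simp [hd.le]))
  rw [abs_sub_comm t c] at hlip
  have := abs_sub_abs_le_abs_sub (deriv f t) (deriv f c)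
  nlinarith

lemma hasDerivAt_deriv_of_contDiff_two (hf : ContDiff ℝ 2 f) (t : ℝ) :
    HasDerivAt (deriv f) (iteratedDeriv 2 f t) t := by
  rw [iteratedDeriv_succ, iteratedDeriv_one]
  exact (hf.differentiable_deriv_two t).hasDerivAt

end Line

/-! ### Layered operators -/

/-- The operator `α(z) ∂²/∂x² + β(z) ∂²/∂y² + ∂²/∂z²`, whose coefficients depend on the height
only. It covers, up to a factor `1/2`, the driftless Laplacian of `Sol(p,q)` and is stable under
all the changes of variables used below. -/
noncomputable def layeredLaplacian (α β : ℝ → ℝ) (f : ℝ × ℝ × ℝ → ℝ) (w : ℝ × ℝ × ℝ) : ℝ :=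
  α w.2.2 * iteratedDeriv 2 (fun t => f (t, w.2.1, w.2.2)) w.1
    + β w.2.2 * iteratedDeriv 2 (fun t => f (w.1, t, w.2.2)) w.2.1
    + iteratedDeriv 2 (fun t => f (w.1, w.2.1, t)) w.2.2

/-- `C²` solutions of `layeredLaplacian α β u = k * u`. -/
structure IsLayeredEigen (α β : ℝ → ℝ) (k : ℝ) (u : ℝ × ℝ × ℝ → ℝ) : Prop where
  contDiff : ContDiff ℝ 2 u
  eq : ∀ w, layeredLaplacian α β u w = k * u w

section Layered

variable {α β : ℝ → ℝ} {f g : ℝ × ℝ × ℝ → ℝ}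

lemma layeredLaplacian_add (hf : ContDiff ℝ 2 f) (hg : ContDiff ℝ 2 g) (w : ℝ × ℝ × ℝ) :
    layeredLaplacian α β (fun w => f w + g w) w =
      layeredLaplacian α β f w + layeredLaplacian α β g w := by
  unfold layeredLaplacian
  rw [iteratedDeriv_fun_add (by push_cast; fun_prop) (by push_cast; fun_prop),
    iteratedDeriv_fun_add (by push_cast; fun_prop) (by push_cast; fun_prop),
    iteratedDeriv_fun_add (by push_cast; fun_prop) (by push_cast; fun_prop)]
  ring

lemma layeredLaplacian_const_mul (c : ℝ) (f : ℝ × ℝ × ℝ → ℝ) (w : ℝ × ℝ × ℝ) :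
    layeredLaplacian α β (fun w => c * f w) w = c * layeredLaplacian α β f w := by
  simp only [layeredLaplacian, iteratedDeriv_const_mul_field]
  ring

lemma layeredLaplacian_sub (hf : ContDiff ℝ 2 f) (hg : ContDiff ℝ 2 g) (w : ℝ × ℝ × ℝ) :
    layeredLaplacian α β (fun w => f w - g w) w =
      layeredLaplacian α β f w - layeredLaplacian α β g w := by
  have h := layeredLaplacian_add (α := α) (β := β) hf (contDiff_const (c := (-1 : ℝ)).mul hg) w
  rw [layeredLaplacian_const_mul] at h
  simpa [sub_eq_add_neg] using h

lemma layeredLaplacian_const (e : ℝ) (w : ℝ × ℝ × ℝ) :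
    layeredLaplacian α β (fun _ => e) w = 0 := by
  simp [layeredLaplacian, iteratedDeriv_const]

end Layered

namespace IsLayeredEigen

variable {α β α' β' : ℝ → ℝ} {k : ℝ} {u v : ℝ × ℝ × ℝ → ℝ}

lemma add (hu : IsLayeredEigen α β k u) (hv : IsLayeredEigen α β k v) :
    IsLayeredEigen α β k (fun w => u w + v w) :=
  ⟨hu.contDiff.add hv.contDiff, fun w => by
    rw [layeredLaplacian_add hu.contDiff hv.contDiff, hu.eq, hv.eq]; ring⟩

lemma const_mul (c : ℝ) (hu : IsLayeredEigen α β k u) :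
    IsLayeredEigen α β k (fun w => c * u w) :=
  ⟨contDiff_const.mul hu.contDiff, fun w => by rw [layeredLaplacian_const_mul, hu.eq]; ring⟩

lemma sub (hu : IsLayeredEigen α β k u) (hv : IsLayeredEigen α β k v) :
    IsLayeredEigen α β k (fun w => u w - v w) :=
  ⟨hu.contDiff.sub hv.contDiff, fun w => by
    rw [layeredLaplacian_sub hu.contDiff hv.contDiff, hu.eq, hv.eq]; ring⟩

lemma swap (hu : IsLayeredEigen α β k u) :
    IsLayeredEigen β α k (fun w => u (w.2.1, w.1, w.2.2)) := by
  refine ⟨hu.contDiff.comp (by fun_prop), fun w => ?_⟩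
  rw [← hu.eq]
  simp only [layeredLaplacian]
  ring

lemma comp_affine (hu : IsLayeredEigen α β k u) (x₀ y₀ z₀ a b c : ℝ)
    (hα : ∀ z, a ^ 2 * α' z = c ^ 2 * α (z₀ + c * z))
    (hβ : ∀ z, b ^ 2 * β' z = c ^ 2 * β (z₀ + c * z)) :
    IsLayeredEigen α' β' (c ^ 2 * k)
      (fun w => u (x₀ + a * w.1, y₀ + b * w.2.1, z₀ + c * w.2.2)) := by
  have hC := hu.contDiff
  refine ⟨by fun_prop, fun w => ?_⟩
  rw [mul_assoc, ← hu.eq]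
  simp only [layeredLaplacian]
  rw [iteratedDeriv_two_comp_affine (f := fun t => u (t, _, _)) (by fun_prop),
    iteratedDeriv_two_comp_affine (f := fun t => u (_, t, _)) (by fun_prop),
    iteratedDeriv_two_comp_affine (f := fun t => u (_, _, t)) (by fun_prop)]
  linear_combination
    iteratedDeriv 2 (fun t => u (t, y₀ + b * w.2.1, z₀ + c * w.2.2)) (x₀ + a * w.1) * hα w.2.2
    + iteratedDeriv 2 (fun t => u (x₀ + a * w.1, t, z₀ + c * w.2.2)) (y₀ + b * w.2.1) * hβ w.2.2

lemma translate (hu : IsLayeredEigen α β k u) (s t : ℝ) :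
    IsLayeredEigen α β k (fun w => u (w.1 + s, w.2.1 + t, w.2.2)) := by
  simpa [add_comm] using hu.comp_affine s t 0 1 1 1 (by simp) (by simp)

end IsLayeredEigen

/-! ### The comparison principle -/

section Comparison

variable {f g : ℝ × ℝ × ℝ → ℝ}

lemma layeredLaplacian_nonpos_of_isLocalMax {α β : ℝ → ℝ} {w : ℝ × ℝ × ℝ} (hα : 0 ≤ α w.2.2)
    (hβ : 0 ≤ β w.2.2) (hf : Continuous f) (hw : IsLocalMax f w) :
    layeredLaplacian α β f w ≤ 0 := by
  have line (c : ℝ → ℝ × ℝ × ℝ) (t : ℝ) (hc : Continuous c) (hct : c t = w) :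
      iteratedDeriv 2 (fun s => f (c s)) t ≤ 0 :=
    iteratedDeriv_two_nonpos_of_isLocalMax
      (IsLocalMax.comp_continuous (g := c) (by rwa [hct]) hc.continuousAt)
      (hf.comp hc).continuousAt
  exact add_nonpos (add_nonpos
    (mul_nonpos_of_nonneg_of_nonpos hα
      (line (fun t => (t, w.2.1, w.2.2)) w.1 (by fun_prop) rfl))
    (mul_nonpos_of_nonneg_of_nonpos hβ
      (line (fun t => (w.1, t, w.2.2)) w.2.1 (by fun_prop) rfl)))
    (line (fun t => (w.1, w.2.1, t)) w.2.2 (by fun_prop) rfl)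

lemma le_of_layeredLaplacian_lt {α β : ℝ → ℝ} {K : Set (ℝ × ℝ × ℝ)} (hK : IsCompact K)
    (hα : ∀ w ∈ K, 0 ≤ α w.2.2) (hβ : ∀ w ∈ K, 0 ≤ β w.2.2) (hf : ContDiff ℝ 2 f)
    (hg : ContDiff ℝ 2 g)
    (h : ∀ w ∈ K, g w < f w → K ∈ 𝓝 w ∧ layeredLaplacian α β g w < layeredLaplacian α β f w) :
    ∀ w ∈ K, f w ≤ g w := by
  by_contra! hcon
  obtain ⟨w₀, hw₀, hpos⟩ := hcon
  have hfg := hf.sub hg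
  obtain ⟨w, hw, hmax⟩ := hK.exists_isMaxOn ⟨w₀, hw₀⟩ hfg.continuous.continuousOn
  have hlt : g w < f w := sub_pos.1 ((sub_pos.2 hpos).trans_le (hmax hw₀))
  obtain ⟨hnhds, hop⟩ := h w hw hlt
  have := layeredLaplacian_nonpos_of_isLocalMax (hα w hw) (hβ w hw) hfg.continuous
    (hmax.isLocalMax hnhds)
  linarith [layeredLaplacian_sub (α := α) (β := β) hf hg w]

end Comparison

/-! ### Interior gradient estimates -/

lemma add_smul_mem_closedBall {E : Type*} [SeminormedAddCommGroup E] [NormedSpace ℝ E]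
    (c : E) {w : E} {d : ℝ} (hd : 0 ≤ d) (hw : w ∈ Metric.closedBall 0 1) :
    c + d • w ∈ Metric.closedBall c d := by
  rw [mem_closedBall_iff_norm, add_sub_cancel_left, norm_smul, norm_of_nonneg hd]
  exact mul_le_of_le_one_right hd (mem_closedBall_zero_iff.1 hw)

/-- Two-sided bounds, with constant `Θ`, for the coefficients of a layered operator at the heights
in `S`. -/
structure EllipticOn (Θ : ℝ) (α β : ℝ → ℝ) (S : Set ℝ) : Prop where
  one_le : 1 ≤ Θ
  fst_le : ∀ z ∈ S, α z ≤ Θ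
  snd_le : ∀ z ∈ S, β z ≤ Θ
  one_le_mul_fst : ∀ z ∈ S, 1 ≤ Θ * α z
  one_le_mul_snd : ∀ z ∈ S, 1 ≤ Θ * β z

namespace EllipticOn

variable {Θ : ℝ} {α β : ℝ → ℝ} {S T : Set ℝ} {z : ℝ}

lemma pos (h : EllipticOn Θ α β S) : 0 < Θ := one_pos.trans_le h.one_le

lemma fst_pos (h : EllipticOn Θ α β S) (hz : z ∈ S) : 0 < α z :=
  pos_of_mul_pos_right (one_pos.trans_le (h.one_le_mul_fst z hz)) h.pos.le

lemma snd_pos (h : EllipticOn Θ α β S) (hz : z ∈ S) : 0 < β z :=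
  pos_of_mul_pos_right (one_pos.trans_le (h.one_le_mul_snd z hz)) h.pos.le

lemma swap (h : EllipticOn Θ α β S) : EllipticOn Θ β α S :=
  ⟨h.one_le, h.snd_le, h.fst_le, h.one_le_mul_snd, h.one_le_mul_fst⟩

lemma comp (h : EllipticOn Θ α β S) {φ : ℝ → ℝ} (hφ : MapsTo φ T S) :
    EllipticOn Θ (fun z => α (φ z)) (fun z => β (φ z)) T :=
  ⟨h.one_le, fun _ hz => h.fst_le _ (hφ hz), fun _ hz => h.snd_le _ (hφ hz),
    fun _ hz => h.one_le_mul_fst _ (hφ hz), fun _ hz => h.one_le_mul_snd _ (hφ hz)⟩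

lemma mono (h : EllipticOn Θ α β S) (hT : T ⊆ S) : EllipticOn Θ α β T := h.comp hT

lemma rescale {c d : ℝ} (h : EllipticOn Θ α β (Metric.closedBall c d)) (hd : 0 < d) :
    EllipticOn Θ (fun z => α (c + d * z)) (fun z => β (c + d * z)) (Metric.closedBall 0 1) :=
  h.comp fun _ hz => add_smul_mem_closedBall c hd.le hz

end EllipticOn

lemma mem_closedBall_iff_abs_sub_le {w c : ℝ × ℝ × ℝ} {d : ℝ} :
    w ∈ Metric.closedBall c d ↔
      |w.1 - c.1| ≤ d ∧ |w.2.1 - c.2.1| ≤ d ∧ |w.2.2 - c.2.2| ≤ d := by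
  simp only [Metric.mem_closedBall, Prod.dist_eq, Real.dist_eq, max_le_iff]

lemma abs_deriv_comp_le_norm_fderiv {E : Type*} [NormedAddCommGroup E] [NormedSpace ℝ E]
    {f : E → ℝ} {c : ℝ → E} {c' : E} {t : ℝ} (hf : DifferentiableAt ℝ f (c t))
    (hc : HasDerivAt c c' t) (hc' : ‖c'‖ ≤ 1) :
    |deriv (fun s => f (c s)) t| ≤ ‖fderiv ℝ f (c t)‖ := by
  have h := hf.hasFDerivAt.comp_hasDerivAt t hc
  rw [show (fun s => f (c s)) = f ∘ c from rfl, h.deriv]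
  exact ((fderiv ℝ f (c t)).le_opNorm c').trans (mul_le_of_le_one_right (norm_nonneg _) hc')

lemma norm_fderiv_le_of_abs_partial_deriv_le {f : ℝ × ℝ × ℝ → ℝ} {c : ℝ × ℝ × ℝ} {A B C : ℝ}
    (hf : DifferentiableAt ℝ f c) (hA : |deriv (fun t => f (t, c.2.1, c.2.2)) c.1| ≤ A)
    (hB : |deriv (fun t => f (c.1, t, c.2.2)) c.2.1| ≤ B)
    (hC : |deriv (fun t => f (c.1, c.2.1, t)) c.2.2| ≤ C) : ‖fderiv ℝ f c‖ ≤ A + B + C := by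
  set L := fderiv ℝ f c
  have h₁ : deriv (fun t => f (t, c.2.1, c.2.2)) c.1 = L (1, 0, 0) :=
    (hf.hasFDerivAt.comp_hasDerivAt (f := fun t => (t, c.2.1, c.2.2)) c.1
      ((hasDerivAt_id c.1).prodMk (hasDerivAt_const _ _))).deriv
  have h₂ : deriv (fun t => f (c.1, t, c.2.2)) c.2.1 = L (0, 1, 0) :=
    (hf.hasFDerivAt.comp_hasDerivAt (f := fun t => (c.1, t, c.2.2)) c.2.1
      ((hasDerivAt_const _ _).prodMk ((hasDerivAt_id c.2.1).prodMk (hasDerivAt_const _ _)))).deriv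
  have h₃ : deriv (fun t => f (c.1, c.2.1, t)) c.2.2 = L (0, 0, 1) :=
    (hf.hasFDerivAt.comp_hasDerivAt (f := fun t => (c.1, c.2.1, t)) c.2.2
      ((hasDerivAt_const _ _).prodMk ((hasDerivAt_const _ _).prodMk (hasDerivAt_id c.2.2)))).deriv
  rw [h₁] at hA
  rw [h₂] at hB
  rw [h₃] at hC
  refine L.opNorm_le_bound (add_nonneg (add_nonneg ((abs_nonneg _).trans hA)
    ((abs_nonneg _).trans hB)) ((abs_nonneg _).trans hC)) fun w => ?_
  have hw : L w = w.1 * L (1, 0, 0) + w.2.1 * L (0, 1, 0) + w.2.2 * L (0, 0, 1) := by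
    conv_lhs => rw [show w = w.1 • (1, 0, 0) + w.2.1 • (0, 1, 0) + w.2.2 • ((0, 0, 1) : ℝ × ℝ × ℝ)
      by ext <;> simp]
    simp only [map_add, map_smul, smul_eq_mul]
  have h1 : |w.1| ≤ ‖w‖ := norm_fst_le w
  have h2 : |w.2.1| ≤ ‖w‖ := (norm_fst_le w.2).trans (norm_snd_le w)
  have h3 : |w.2.2| ≤ ‖w‖ := (norm_snd_le w.2).trans (norm_snd_le w)
  calc ‖L w‖ ≤ |w.1 * L (1, 0, 0)| + |w.2.1 * L (0, 1, 0)| + |w.2.2 * L (0, 0, 1)| := by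
        rw [hw]; exact abs_add_three (w.1 * _) (w.2.1 * _) (w.2.2 * _)
    _ ≤ ‖w‖ * A + ‖w‖ * B + ‖w‖ * C := by simp only [abs_mul]; gcongr
    _ = (A + B + C) * ‖w‖ := by ring

lemma layeredLaplacian_quadratic {α β : ℝ → ℝ} (a b c : ℝ) (w : ℝ × ℝ × ℝ) :
    layeredLaplacian α β (fun w => a * w.1 + b * w.1 ^ 2 + c * (w.2.1 ^ 2 + w.2.2 ^ 2)) w =
      2 * b * α w.2.2 + 2 * c * (β w.2.2 + 1) := by
  have quad (e : ℝ) (a b t : ℝ) :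
      iteratedDeriv 2 (fun r => e + a * r + b * r ^ 2) t = 2 * b := by
    refine iteratedDeriv_two_eq_of_hasDerivAt (f' := fun r => a + 2 * b * r) (fun r => ?_) ?_
    · exact ((((hasDerivAt_id' r).const_mul a).const_add e).add
        ((hasDerivAt_pow 2 r).const_mul b)).congr_deriv (by push_cast; ring)
    · exact (((hasDerivAt_id' t).const_mul (2 * b)).const_add a).congr_deriv (by ring)
  have h₁ := quad (c * (w.2.1 ^ 2 + w.2.2 ^ 2)) a b w.1
  have h₂ := quad (a * w.1 + b * w.1 ^ 2 + c * w.2.2 ^ 2) 0 c w.2.1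
  have h₃ := quad (a * w.1 + b * w.1 ^ 2 + c * w.2.1 ^ 2) 0 c w.2.2
  simp only [layeredLaplacian]
  rw [show 2 * b * α w.2.2 + 2 * c * (β w.2.2 + 1) =
    α w.2.2 * (2 * b) + β w.2.2 * (2 * c) + 2 * c by ring]
  congr 1
  · congr 2
    · rw [← h₁]; congr 1; ext r; ring
    · rw [← h₂]; congr 1; ext r; ring
  · rw [← h₃]; congr 1; ext r; ring

section ReflectBarrier

variable {Θ M : ℝ} {α β : ℝ → ℝ}

/-- The half box on which the odd part `u(x,y,z) - u(-x,y,z)` of a solution is estimated: this odd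
part vanishes on the face `x = 0`. -/
def halfBox : Set (ℝ × ℝ × ℝ) := Icc 0 1 ×ˢ (Icc (-1) 1 ×ˢ Icc (-1) 1)

lemma halfBox_mem_nhds {x y z : ℝ} (hx : 0 < x) (h : x + y ^ 2 + z ^ 2 < 1) :
    halfBox ∈ 𝓝 (x, y, z) := by
  have hy := abs_lt.1 ((sq_lt_one_iff_abs_lt_one y).1 (by nlinarith [sq_nonneg z]))
  have hz := abs_lt.1 ((sq_lt_one_iff_abs_lt_one z).1 (by nlinarith [sq_nonneg y]))
  exact prod_mem_nhds (Icc_mem_nhds hx (by nlinarith [sq_nonneg y, sq_nonneg z]))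
    (prod_mem_nhds (Icc_mem_nhds hy.1 hy.2) (Icc_mem_nhds hz.1 hz.2))

/-- A strict supersolution that is linear in `x` along the axis and dominates `2 * M` on the faces
of `halfBox` other than `x = 0`. -/
def reflectBarrier (Θ M : ℝ) (w : ℝ × ℝ × ℝ) : ℝ :=
  (6 * Θ ^ 2 + 2) * M * w.1 + -(6 * Θ ^ 2 * M) * w.1 ^ 2 + 2 * M * (w.2.1 ^ 2 + w.2.2 ^ 2)

lemma le_reflectBarrier (hM : 0 ≤ M) {x y z : ℝ} (hw : (x, y, z) ∈ halfBox) :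
    2 * M * (x + y ^ 2 + z ^ 2) ≤ reflectBarrier Θ M (x, y, z) := by
  have : 0 ≤ 6 * Θ ^ 2 * M * (x * (1 - x)) :=
    mul_nonneg (by positivity) (mul_nonneg hw.1.1 (sub_nonneg.2 hw.1.2))
  simp only [reflectBarrier]
  linarith

lemma layeredLaplacian_reflectBarrier_neg {S : Set ℝ} (hE : EllipticOn Θ α β S) (hM : 0 < M)
    {w : ℝ × ℝ × ℝ} (hw : w.2.2 ∈ S) : layeredLaplacian α β (reflectBarrier Θ M) w < 0 := by
  unfold reflectBarrier
  rw [layeredLaplacian_quadratic]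
  have hα : Θ ≤ Θ ^ 2 * α w.2.2 := by nlinarith [hE.one_le_mul_fst _ hw, hE.pos]
  have : 0 < M * (12 * (Θ ^ 2 * α w.2.2) - 4 * (β w.2.2 + 1)) :=
    mul_pos hM (by linarith [hE.one_le, hE.snd_le _ hw])
  linarith

end ReflectBarrier

namespace IsLayeredEigen

variable {Θ k M : ℝ} {α β : ℝ → ℝ} {u : ℝ × ℝ × ℝ → ℝ}

lemma rescale (hu : IsLayeredEigen α β k u) (c : ℝ × ℝ × ℝ) (d : ℝ) :
    IsLayeredEigen (fun z => α (c.2.2 + d * z)) (fun z => β (c.2.2 + d * z)) (d ^ 2 * k)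
      (fun w => u (c + d • w)) :=
  hu.comp_affine c.1 c.2.1 c.2.2 d d d (fun _ => rfl) (fun _ => rfl)

lemma reflect (hu : IsLayeredEigen α β k u) :
    IsLayeredEigen α β k (fun w => u (-w.1, w.2.1, w.2.2)) := by
  simpa using hu.comp_affine 0 0 0 (-1) 1 1 (by simp) (by simp)

lemma sub_reflect_le (hE : EllipticOn Θ α β (Metric.closedBall 0 1)) (hk : 0 ≤ k)
    (hu : IsLayeredEigen α β k u) (hM : 0 < M) (hb : ∀ w ∈ Metric.closedBall 0 1, |u w| ≤ M)
    {t : ℝ} (ht : t ∈ Icc 0 1) : u (t, 0, 0) - u (-t, 0, 0) ≤ (6 * Θ ^ 2 + 2) * M * t := by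
  have hv := hu.sub hu.reflect
  have hball : ∀ w ∈ halfBox, w.2.2 ∈ Metric.closedBall (0 : ℝ) 1 := fun w hw => by
    simpa [abs_le] using hw.2.2
  have key := le_of_layeredLaplacian_lt (g := reflectBarrier Θ M)
    (isCompact_Icc.prod (isCompact_Icc.prod isCompact_Icc))
    (fun w hw => (hE.fst_pos (hball w hw)).le) (fun w hw => (hE.snd_pos (hball w hw)).le)
    hv.contDiff (by unfold reflectBarrier; fun_prop) ?_ (t, 0, 0) ⟨ht, by simp⟩
  · have : 0 ≤ 6 * Θ ^ 2 * M * t ^ 2 := by positivity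
    simp only [reflectBarrier] at key
    linarith
  rintro ⟨x, y, z⟩ hw hlt
  dsimp only at hlt
  have hvM : u (x, y, z) - u (-x, y, z) ≤ 2 * M := by
    have hmem {s : ℝ} (hs : |s| ≤ 1) : |u (s, y, z)| ≤ M :=
      hb _ (mem_closedBall_iff_abs_sub_le.2 (by
        simpa using ⟨hs, abs_le.2 hw.2.1, abs_le.2 hw.2.2⟩))
    have hx := abs_le.2 ⟨by linarith [hw.1.1], hw.1.2⟩
    linarith [abs_le.1 (hmem hx), abs_le.1 (hmem ((abs_neg x).trans_le hx))]
  have hψ := le_reflectBarrier (Θ := Θ) hM.le hw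
  have hx₀ : 0 ≤ x := hw.1.1
  have hv_pos : 0 < u (x, y, z) - u (-x, y, z) :=
    (le_trans (by positivity) hψ).trans_lt hlt
  refine ⟨halfBox_mem_nhds (hx₀.lt_of_ne ?_) (by by_contra! hcon; nlinarith), ?_⟩
  · rintro rfl
    simp at hv_pos
  · rw [hv.eq]
    exact (layeredLaplacian_reflectBarrier_neg hE hM (hball _ hw)).trans_le
      (mul_nonneg hk hv_pos.le)

/-- The constant in the interior estimate for the horizontal derivatives. -/
noncomputable def horizontalConst (Θ : ℝ) : ℝ := 3 * Θ ^ 2 + 1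

lemma horizontalConst_pos : 0 < horizontalConst Θ := by unfold horizontalConst; positivity

lemma abs_deriv_fst_zero_le (hE : EllipticOn Θ α β (Metric.closedBall 0 1)) (hk : 0 ≤ k)
    (hu : IsLayeredEigen α β k u) (hM : 0 < M) (hb : ∀ w ∈ Metric.closedBall 0 1, |u w| ≤ M) :
    |deriv (fun t => u (t, 0, 0)) 0| ≤ horizontalConst Θ * M := by
  have hC := hu.contDiff
  set c := 2 * (horizontalConst Θ * M)
  have hc : 0 ≤ c := by have := horizontalConst_pos (Θ := Θ); positivity
  have hpos {t : ℝ} (ht : t ∈ Icc 0 1) : |u (t, 0, 0) - u (-t, 0, 0)| ≤ c * t := by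
    have h₁ := hu.sub_reflect_le hE hk hM hb ht
    have h₂ := (hu.const_mul (-1)).sub_reflect_le hE hk hM (fun w hw => by simpa using hb w hw) ht
    rw [show (6 * Θ ^ 2 + 2) * M = c by simp only [c, horizontalConst]; ring] at h₁ h₂
    exact abs_le.2 ⟨by linarith, h₁⟩
  have hodd : ∀ᶠ t : ℝ in 𝓝 0, |u (t, 0, 0) - u (-t, 0, 0)| ≤ c * |t| := by
    filter_upwards [Icc_mem_nhds (show (-1 : ℝ) < 0 by norm_num) one_pos] with t ht
    rcases le_total 0 t with h | h
    · rw [abs_of_nonneg h]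
      exact hpos ⟨h, ht.2⟩
    · rw [abs_of_nonpos h, abs_sub_comm]
      simpa using hpos (t := -t) ⟨by linarith, by linarith [ht.1]⟩
  have hderiv : HasDerivAt (fun t => u (t, 0, 0)) (deriv (fun t => u (t, 0, 0)) 0) 0 :=
    ((hC.comp (by fun_prop : ContDiff ℝ 2 fun t : ℝ => (t, (0 : ℝ), (0 : ℝ)))).differentiable
      (by norm_num) 0).hasDerivAt
  have hrefl : HasDerivAt (fun t => u (-t, 0, 0)) (-deriv (fun t => u (t, 0, 0)) 0) 0 := by
    simpa using HasDerivAt.comp_const_sub (f := fun t => u (t, 0, 0)) 0 0 (by simpa using hderiv)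
  have h := (hderiv.sub hrefl).le_of_lip' hc (by simpa using hodd)
  rw [sub_neg_eq_add, ← two_mul, norm_mul, norm_two] at h
  exact le_of_mul_le_mul_left h two_pos

lemma abs_deriv_fst_le {c : ℝ × ℝ × ℝ} {d : ℝ} (hd : 0 < d)
    (hE : EllipticOn Θ α β (Metric.closedBall c.2.2 d)) (hk : 0 ≤ k)
    (hu : IsLayeredEigen α β k u) (hM : 0 < M) (hb : ∀ w ∈ Metric.closedBall c d, |u w| ≤ M) :
    |deriv (fun t => u (t, c.2.1, c.2.2)) c.1| ≤ horizontalConst Θ * (M / d) := by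
  have h := (hu.rescale c d).abs_deriv_fst_zero_le (hE.rescale hd) (by positivity) hM
    fun w hw => hb _ (add_smul_mem_closedBall c hd.le hw)
  have hline : (fun t : ℝ => u (c + d • (t, (0 : ℝ), (0 : ℝ)))) =
      fun t => (fun s => u (c.1 + s, c.2.1, c.2.2)) (d * t) := by
    ext t; congr 1; ext <;> simp
  rw [hline, deriv_comp_mul_left d (fun s => u (c.1 + s, c.2.1, c.2.2)) 0, mul_zero,
    deriv_comp_const_add (f := fun t => u (t, c.2.1, c.2.2)), add_zero, smul_eq_mul, abs_mul,
    abs_of_pos hd] at h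
  rw [mul_div_assoc', le_div_iff₀' hd]
  exact h

variable {d : ℝ} {c : ℝ × ℝ × ℝ}

lemma abs_sub_translate_fst_le (hd : 0 < d) (hE : EllipticOn Θ α β (Metric.closedBall c.2.2 d))
    (hk : 0 ≤ k) (hu : IsLayeredEigen α β k u) (hM : 0 < M)
    (hb : ∀ w ∈ Metric.closedBall c d, |u w| ≤ M) {s : ℝ} (hs : |s| ≤ d / 4)
    {w : ℝ × ℝ × ℝ} (hw : w ∈ Metric.closedBall c (d / 4)) :
    |u (w.1 + s, w.2.1, w.2.2) - u w| ≤ horizontalConst Θ * (M / (d / 2)) * |s| := by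
  have hC := hu.contDiff
  obtain ⟨hx, hy, hz⟩ := mem_closedBall_iff_abs_sub_le.1 hw
  have hderiv : ∀ r ∈ Metric.closedBall c.1 (d / 2),
      ‖deriv (fun t => u (t, w.2.1, w.2.2)) r‖ ≤ horizontalConst Θ * (M / (d / 2)) := by
    intro r hr
    have hmem : (r, w.2.1, w.2.2) ∈ Metric.closedBall c (d / 2) :=
      mem_closedBall_iff_abs_sub_le.2 ⟨hr, by linarith, by linarith⟩
    exact hu.abs_deriv_fst_le (c := (r, w.2.1, w.2.2)) (by positivity)
      (hE.mono (Metric.closedBall_subset_closedBall' (by rw [Real.dist_eq]; linarith))) hk hM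
      fun w' hw' => hb w' (Metric.closedBall_subset_closedBall'
        (by linarith [Metric.mem_closedBall.1 hmem]) hw')
  have hxs : w.1 + s ∈ Metric.closedBall c.1 (d / 2) := by
    rw [mem_closedBall_iff_norm, norm_eq_abs, add_sub_right_comm]
    exact (abs_add_le _ _).trans (by linarith)
  simpa using (convex_closedBall c.1 (d / 2)).norm_image_sub_le_of_norm_deriv_le
    (f := fun t => u (t, w.2.1, w.2.2))
    (fun r _ => (show ContDiff ℝ 2 fun t => u (t, w.2.1, w.2.2) by fun_prop).differentiable
      (by norm_num) r) hderiv
    (Metric.closedBall_subset_closedBall (by linarith) hx) hxs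

-- The bound on `∂u/∂x` is applied to the solution `u(x + s, y, z) - u(x, y, z)`.
lemma abs_iteratedDeriv_two_fst_le (hd : 0 < d)
    (hE : EllipticOn Θ α β (Metric.closedBall c.2.2 d)) (hk : 0 ≤ k)
    (hu : IsLayeredEigen α β k u) (hM : 0 < M) (hb : ∀ w ∈ Metric.closedBall c d, |u w| ≤ M) :
    |iteratedDeriv 2 (fun t => u (t, c.2.1, c.2.2)) c.1| ≤
      8 * horizontalConst Θ ^ 2 * (M / d ^ 2) := by
  have hC := hu.contDiff
  have hA := horizontalConst_pos (Θ := Θ)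
  have hline : ContDiff ℝ 2 (fun t => u (t, c.2.1, c.2.2)) := by fun_prop
  refine (hasDerivAt_deriv_of_contDiff_two hline c.1).le_of_lip' (by positivity) ?_
  filter_upwards [Metric.closedBall_mem_nhds c.1 (show 0 < d / 4 by positivity)] with r hr
  rcases eq_or_ne r c.1 with rfl | hne
  · simp
  set s := r - c.1
  have hs : 0 < |s| := abs_pos.2 (sub_ne_zero.2 hne)
  have hest := ((hu.translate s 0).sub hu).abs_deriv_fst_le (c := c) (d := d / 4)
    (M := horizontalConst Θ * (M / (d / 2)) * |s|) (by positivity)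
    (hE.mono (Metric.closedBall_subset_closedBall (by linarith))) hk (by positivity)
    (fun w hw => by simpa using hu.abs_sub_translate_fst_le hd hE hk hM hb hr hw)
  have hdiff (a : ℝ) : DifferentiableAt ℝ (fun t => u (t + a, c.2.1, c.2.2)) c.1 :=
    (show ContDiff ℝ 2 fun t => u (t + a, c.2.1, c.2.2) by fun_prop).differentiable
      (by norm_num) _
  simp only [add_zero] at hest
  rw [deriv_fun_sub (hdiff s) (by simpa using hdiff 0),
    deriv_comp_add_const (f := fun t => u (t, c.2.1, c.2.2)), add_sub_cancel] at hest
  calc ‖deriv (fun t => u (t, c.2.1, c.2.2)) r - deriv (fun t => u (t, c.2.1, c.2.2)) c.1‖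
      ≤ horizontalConst Θ * (horizontalConst Θ * (M / (d / 2)) * |s| / (d / 4)) := hest
    _ = 8 * horizontalConst Θ ^ 2 * (M / d ^ 2) * ‖s‖ := by
      rw [norm_eq_abs]; field_simp; ring

lemma swap_mem_closedBall {w : ℝ × ℝ × ℝ} (hw : w ∈ Metric.closedBall (c.2.1, c.1, c.2.2) d) :
    (w.2.1, w.1, w.2.2) ∈ Metric.closedBall c d := by
  rw [mem_closedBall_iff_abs_sub_le] at hw ⊢
  exact ⟨hw.2.1, hw.1, hw.2.2⟩

lemma abs_iteratedDeriv_two_thd_le (hE : EllipticOn Θ α β (Metric.closedBall 0 1)) (hk : 0 ≤ k)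
    (hu : IsLayeredEigen α β k u) (hM : 0 < M) (hb : ∀ w ∈ Metric.closedBall 0 1, |u w| ≤ M)
    {s : ℝ} (hs : |s| ≤ 1 / 2) :
    |iteratedDeriv 2 (fun t => u (0, 0, t)) s| ≤
      (k + 64 * Θ * horizontalConst Θ ^ 2) * M := by
  set c : ℝ × ℝ × ℝ := (0, 0, s)
  have hcz : Metric.closedBall s (1 / 2) ⊆ Metric.closedBall 0 1 :=
    Metric.closedBall_subset_closedBall' (by rw [dist_zero_right, norm_eq_abs]; linarith)
  have hc : Metric.closedBall c (1 / 2) ⊆ Metric.closedBall 0 1 := fun w hw =>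
    mem_closedBall_iff_abs_sub_le.2 (by
      obtain ⟨h₁, h₂, h₃⟩ := mem_closedBall_iff_abs_sub_le.1 hw
      exact ⟨h₁.trans (by norm_num), h₂.trans (by norm_num), hcz h₃⟩)
  have hsz : s ∈ Metric.closedBall 0 1 := hcz (Metric.mem_closedBall_self (by norm_num))
  have hxx := hu.abs_iteratedDeriv_two_fst_le (c := c) (by norm_num) (hE.mono hcz) hk hM
    fun w hw => hb w (hc hw)
  have hyy := hu.swap.abs_iteratedDeriv_two_fst_le (c := (0, 0, s)) (by norm_num)
    (hE.mono hcz).swap hk hM fun w hw => hb _ (hc (swap_mem_closedBall (c := c) hw))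
  rw [show 8 * horizontalConst Θ ^ 2 * (M / (1 / 2) ^ 2) = 32 * horizontalConst Θ ^ 2 * M by ring]
    at hxx hyy
  have hα : |α s * iteratedDeriv 2 (fun t => u (t, 0, s)) 0| ≤
      Θ * (32 * horizontalConst Θ ^ 2 * M) := by
    rw [abs_mul, abs_of_pos (hE.fst_pos hsz)]
    exact mul_le_mul (hE.fst_le s hsz) hxx (abs_nonneg _) hE.pos.le
  have hβ : |β s * iteratedDeriv 2 (fun t => u (0, t, s)) 0| ≤
      Θ * (32 * horizontalConst Θ ^ 2 * M) := by
    rw [abs_mul, abs_of_pos (hE.snd_pos hsz)]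
    exact mul_le_mul (hE.snd_le s hsz) hyy (abs_nonneg _) hE.pos.le
  have hku : |k * u c| ≤ k * M := by
    rw [abs_mul, abs_of_nonneg hk]
    exact mul_le_mul_of_nonneg_left (hb c (hc (Metric.mem_closedBall_self (by norm_num)))) hk
  have heq := hu.eq c
  simp only [layeredLaplacian, c] at heq hku
  rw [abs_le] at hα hβ hku ⊢
  constructor <;> linarith

/-- The constant in the interior gradient estimate `norm_fderiv_le`. -/
noncomputable def gradientConst (Θ k : ℝ) : ℝ :=
  2 * horizontalConst Θ + (4 + (k + 64 * Θ * horizontalConst Θ ^ 2) / 2)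

lemma one_le_gradientConst (hΘ : 0 ≤ Θ) (hk : 0 ≤ k) : 1 ≤ gradientConst Θ k := by
  have := (horizontalConst_pos (Θ := Θ)).le
  have : 0 ≤ (k + 64 * Θ * horizontalConst Θ ^ 2) / 2 := by positivity
  unfold gradientConst
  linarith

lemma norm_fderiv_zero_le (hE : EllipticOn Θ α β (Metric.closedBall 0 1)) (hk : 0 ≤ k)
    (hu : IsLayeredEigen α β k u) (hM : 0 < M) (hb : ∀ w ∈ Metric.closedBall 0 1, |u w| ≤ M) :
    ‖fderiv ℝ u 0‖ ≤ gradientConst Θ k * M := by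
  have hC := hu.contDiff
  have hx := hu.abs_deriv_fst_zero_le hE hk hM hb
  have hy := hu.swap.abs_deriv_fst_zero_le hE.swap hk hM
    fun w hw => hb _ (swap_mem_closedBall (c := 0) hw)
  have hz := abs_deriv_le_of_abs_iteratedDeriv_two_le (f := fun t => u (0, 0, t)) (t := 0)
    (d := 1 / 2) (by fun_prop) (by norm_num)
    (fun s hs => hb _ (mem_closedBall_iff_abs_sub_le.2 (by simpa using by simp at hs; linarith)))
    (fun s hs => hu.abs_iteratedDeriv_two_thd_le hE hk hM hb (by simpa using hs))
  refine (norm_fderiv_le_of_abs_partial_deriv_le (hC.differentiable (by norm_num) _)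
    hx hy hz).trans (le_of_eq ?_)
  simp only [gradientConst]
  ring

lemma norm_fderiv_le (hd : 0 < d) (hd1 : d ≤ 1)
    (hE : EllipticOn Θ α β (Metric.closedBall c.2.2 d)) (hk : 0 ≤ k)
    (hu : IsLayeredEigen α β k u) (hM : 0 < M) (hb : ∀ w ∈ Metric.closedBall c d, |u w| ≤ M) :
    ‖fderiv ℝ u c‖ ≤ gradientConst Θ k * (M / d) := by
  have h := (hu.rescale c d).norm_fderiv_zero_le (hE.rescale hd) (by positivity) hM
    fun w hw => hb _ (add_smul_mem_closedBall c hd.le hw)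
  rw [fderiv_comp_smul (f := fun w => u (c + w)), smul_zero, fderiv_comp_add_left, add_zero,
    norm_smul, norm_of_nonneg hd.le] at h
  have hmono : gradientConst Θ (d ^ 2 * k) ≤ gradientConst Θ k := by
    have : d ^ 2 * k ≤ k := mul_le_of_le_one_left hk (pow_le_one₀ hd.le hd1)
    unfold gradientConst
    linarith
  rw [mul_div_assoc', le_div_iff₀' hd]
  exact h.trans (mul_le_mul_of_nonneg_right hmono hM.le)

end IsLayeredEigen

/-! ### The Harnack inequality -/

section PowerBarrier

variable {b : ℝ} {m : ℕ} {w : ℝ × ℝ × ℝ}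

/-- The squared Euclidean norm; the norm of `ℝ × ℝ × ℝ` in Mathlib is the maximum norm. -/
def sqNorm (w : ℝ × ℝ × ℝ) : ℝ := w.1 ^ 2 + w.2.1 ^ 2 + w.2.2 ^ 2

lemma sqNorm_nonneg (w : ℝ × ℝ × ℝ) : 0 ≤ sqNorm w := by unfold sqNorm; positivity

lemma continuous_sqNorm : Continuous sqNorm := by unfold sqNorm; fun_prop

lemma mem_closedBall_of_sqNorm_le {r : ℝ} (hr : 0 ≤ r) (h : sqNorm w ≤ r ^ 2) :
    w ∈ Metric.closedBall 0 r := by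
  unfold sqNorm at h
  rw [mem_closedBall_iff_abs_sub_le]
  simp only [Prod.fst_zero, Prod.snd_zero, sub_zero]
  refine ⟨abs_le_of_sq_le_sq ?_ hr, abs_le_of_sq_le_sq ?_ hr, abs_le_of_sq_le_sq ?_ hr⟩ <;>
  linarith [sq_nonneg w.1, sq_nonneg w.2.1, sq_nonneg w.2.2]

/-- A regularised negative power of the Euclidean distance to the origin: for large `m` it is a
strict subsolution away from the ball `sqNorm w ≤ b`. -/
noncomputable def powerBarrier (b : ℝ) (m : ℕ) (w : ℝ × ℝ × ℝ) : ℝ := (sqNorm w + b)⁻¹ ^ m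

lemma contDiff_powerBarrier (hb : 0 < b) : ContDiff ℝ 2 (powerBarrier b m) := by
  refine ContDiff.pow (ContDiff.inv (by unfold sqNorm; fun_prop) fun w => ?_) m
  have := sqNorm_nonneg w
  positivity

lemma hasDerivAt_inv_sq_add_pow (m : ℕ) (hb : 0 < b) (t : ℝ) :
    HasDerivAt (fun t => (t ^ 2 + b)⁻¹ ^ m) (-(2 * m * t * (t ^ 2 + b)⁻¹ ^ (m + 1))) t := by
  refine ((((hasDerivAt_pow 2 t).add_const b).fun_inv (by positivity)).fun_pow m).congr_deriv ?_
  cases m with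
  | zero => simp
  | succ n =>
    rw [Nat.add_sub_cancel, div_eq_mul_inv, ← inv_pow]
    push_cast
    ring

lemma iteratedDeriv_two_inv_sq_add_pow (m : ℕ) (hb : 0 < b) (t : ℝ) :
    iteratedDeriv 2 (fun t => (t ^ 2 + b)⁻¹ ^ m) t =
      4 * m * (m + 1) * t ^ 2 * (t ^ 2 + b)⁻¹ ^ (m + 2) - 2 * m * (t ^ 2 + b)⁻¹ ^ (m + 1) := by
  refine iteratedDeriv_two_eq_of_hasDerivAt (hasDerivAt_inv_sq_add_pow m hb) ?_
  refine (((hasDerivAt_id' t).const_mul (2 * (m : ℝ))).fun_mul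
    (hasDerivAt_inv_sq_add_pow (m + 1) hb t)).fun_neg.congr_deriv ?_
  push_cast
  ring

lemma layeredLaplacian_powerBarrier (α β : ℝ → ℝ) (hb : 0 < b) (w : ℝ × ℝ × ℝ) :
    layeredLaplacian α β (powerBarrier b m) w =
      2 * m * (sqNorm w + b)⁻¹ * ((m + 1) *
        (2 * ((α w.2.2 * w.1 ^ 2 + β w.2.2 * w.2.1 ^ 2 + w.2.2 ^ 2) * (sqNorm w + b)⁻¹))
        - (α w.2.2 + β w.2.2 + 1)) * powerBarrier b m w := by
  obtain ⟨x, y, z⟩ := w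
  have h₁ := iteratedDeriv_two_inv_sq_add_pow m (b := y ^ 2 + z ^ 2 + b) (by positivity) x
  have h₂ := iteratedDeriv_two_inv_sq_add_pow m (b := x ^ 2 + z ^ 2 + b) (by positivity) y
  have h₃ := iteratedDeriv_two_inv_sq_add_pow m (b := x ^ 2 + y ^ 2 + b) (by positivity) z
  have e₁ (t : ℝ) : t ^ 2 + (y ^ 2 + z ^ 2 + b) = t ^ 2 + y ^ 2 + z ^ 2 + b := by ring
  have e₂ (t : ℝ) : t ^ 2 + (x ^ 2 + z ^ 2 + b) = x ^ 2 + t ^ 2 + z ^ 2 + b := by ring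
  have e₃ (t : ℝ) : t ^ 2 + (x ^ 2 + y ^ 2 + b) = x ^ 2 + y ^ 2 + t ^ 2 + b := by ring
  simp only [e₁] at h₁
  simp only [e₂] at h₂
  simp only [e₃] at h₃
  simp only [layeredLaplacian, powerBarrier, sqNorm, h₁, h₂, h₃]
  ring

lemma mul_powerBarrier_lt_layeredLaplacian {Θ k : ℝ} {α β : ℝ → ℝ} {S : Set ℝ}
    (hE : EllipticOn Θ α β S) (hw : w.2.2 ∈ S) (hk : 0 ≤ k) (hb : 0 < b) (hb1 : b ≤ 1)
    (hm : Θ * (3 * Θ + 5 * k + 1) ≤ m + 1) (hbw : b ≤ sqNorm w) (hw4 : sqNorm w ≤ 4) :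
    k * powerBarrier b m w < layeredLaplacian α β (powerBarrier b m) w := by
  rw [layeredLaplacian_powerBarrier α β hb]
  set A := α w.2.2 * w.1 ^ 2 + β w.2.2 * w.2.1 ^ 2 + w.2.2 ^ 2
  set σ := (sqNorm w + b)⁻¹
  have hΘ := hE.one_le
  have hσ_pos : 0 < σ := inv_pos.2 (by linarith)
  have hσ_mul : σ * (sqNorm w + b) = 1 := inv_mul_cancel₀ (by linarith)
  have hA_nonneg : 0 ≤ A := by have := hE.fst_pos hw; have := hE.snd_pos hw; positivity
  have hA : sqNorm w ≤ Θ * A := by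
    have := mul_le_mul_of_nonneg_right (hE.one_le_mul_fst _ hw) (sq_nonneg w.1)
    have := mul_le_mul_of_nonneg_right (hE.one_le_mul_snd _ hw) (sq_nonneg w.2.1)
    have := mul_le_mul_of_nonneg_right hΘ (sq_nonneg w.2.2)
    simp only [sqNorm, A]
    linarith
  have hAσ : 1 ≤ Θ * (2 * (A * σ)) := by nlinarith
  have hmain : 3 * Θ + 5 * k + 1 ≤ (m + 1) * (2 * (A * σ)) := calc
    3 * Θ + 5 * k + 1 ≤ (3 * Θ + 5 * k + 1) * (Θ * (2 * (A * σ))) :=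
        le_mul_of_one_le_right (by positivity) hAσ
    _ = Θ * (3 * Θ + 5 * k + 1) * (2 * (A * σ)) := by ring
    _ ≤ _ := mul_le_mul_of_nonneg_right hm (by positivity)
  have hcoef : 5 * k + 1 ≤ (m + 1) * (2 * (A * σ)) - (α w.2.2 + β w.2.2 + 1) := by
    linarith [hE.fst_le _ hw, hE.snd_le _ hw]
  have hmσ : 1 ≤ 5 * (m * σ) := by
    have hσ5 : 1 ≤ 5 * σ := by nlinarith
    have hm1 : (1 : ℝ) ≤ m := by nlinarith
    nlinarith
  refine mul_lt_mul_of_pos_right ?_ (pow_pos hσ_pos m)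
  nlinarith [mul_le_mul_of_nonneg_left hcoef (show 0 ≤ m * σ by positivity)]

lemma mul_pow_powerBarrier_le_one (hb : 0 < b) : b ^ m * powerBarrier b m w ≤ 1 := by
  have := sqNorm_nonneg w
  rw [powerBarrier, ← mul_pow]
  refine pow_le_one₀ (by positivity) ?_
  rw [mul_inv_le_iff₀ (by positivity)]
  linarith

lemma le_powerBarrier_sub (hb : 0 < b) (hb1 : b ≤ 1) (hm : m ≠ 0) (hw : sqNorm w ≤ 3) :
    1 / 5 * (1 / 4) ^ m ≤ powerBarrier b m w - (4 + b)⁻¹ ^ m := by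
  have hs := sqNorm_nonneg w
  have hlow : (1 / 4 : ℝ) ^ m ≤ powerBarrier b m w := by
    simp only [powerBarrier, one_div]
    gcongr
    linarith
  have hratio : (4 + b)⁻¹ ≤ 4 / 5 * (sqNorm w + b)⁻¹ := by
    rw [← div_eq_mul_inv, le_div_iff₀ (by positivity), inv_mul_le_iff₀ (by positivity)]
    linarith
  have hedge : (4 + b)⁻¹ ^ m ≤ 4 / 5 * powerBarrier b m w := calc
    (4 + b)⁻¹ ^ m ≤ (4 / 5 * (sqNorm w + b)⁻¹) ^ m := pow_le_pow_left₀ (by positivity) hratio m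
    _ = (4 / 5) ^ m * powerBarrier b m w := mul_pow _ _ m
    _ ≤ 4 / 5 * powerBarrier b m w := mul_le_mul_of_nonneg_right
        (pow_le_of_le_one (by norm_num) (by norm_num) hm) (by unfold powerBarrier; positivity)
  linarith

end PowerBarrier

namespace IsLayeredEigen

variable {Θ k : ℝ} {m : ℕ} {α β : ℝ → ℝ} {u : ℝ × ℝ × ℝ → ℝ}

lemma mul_pow_le_of_le_on_closedBall (hE : EllipticOn Θ α β (Metric.closedBall 0 2)) (hk : 0 ≤ k)
    (hm : Θ * (3 * Θ + 5 * k + 1) ≤ m + 1) (hu : IsLayeredEigen α β k u) (hpos : ∀ w, 0 < u w)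
    {r l : ℝ} (hr : 0 < r) (hr1 : r ≤ 1) (hl : 0 < l)
    (hlu : ∀ w ∈ Metric.closedBall 0 r, l ≤ u w) {w : ℝ × ℝ × ℝ} (hw : sqNorm w ≤ 3) :
    l * (r ^ 2) ^ m * (1 / 5 * (1 / 4) ^ m) ≤ u w := by
  set b := r ^ 2
  have hb : 0 < b := by positivity
  have hb1 : b ≤ 1 := pow_le_one₀ hr.le hr1
  set e := (4 + b)⁻¹ ^ m
  have he : 0 < e := by positivity
  have hlb : 0 < l * b ^ m := by positivity
  have hm0 : m ≠ 0 := by rintro rfl; push_cast at hm; nlinarith [hE.one_le]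
  have hg := contDiff_powerBarrier (m := m) hb
  have hball : ∀ w, sqNorm w ≤ 4 → w ∈ Metric.closedBall 0 2 := fun w hw =>
    mem_closedBall_of_sqNorm_le (by norm_num) (by linarith)
  have hheight : ∀ w, sqNorm w ≤ 4 → w.2.2 ∈ Metric.closedBall (0 : ℝ) 2 := fun w hw =>
    (mem_closedBall_iff_abs_sub_le.1 (hball w hw)).2.2
  have hK : IsCompact {w | sqNorm w ≤ 4} := (isCompact_closedBall 0 2).of_isClosed_subset
    (isClosed_le continuous_sqNorm continuous_const) hball
  have key := le_of_layeredLaplacian_lt (f := fun w => l * b ^ m * (powerBarrier b m w - e)) hK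
    (fun w hw => (hE.fst_pos (hheight w hw)).le) (fun w hw => (hE.snd_pos (hheight w hw)).le)
    (by fun_prop) hu.contDiff ?_ w (by simp only [mem_ofPred_eq]; linarith)
  · exact (mul_le_mul_of_nonneg_left (le_powerBarrier_sub hb hb1 hm0 hw) hlb.le).trans key
  intro w (hw4 : sqNorm w ≤ 4) hlt
  have hbw : b < sqNorm w := by
    by_contra! hcon
    have h₁ := hlu w (mem_closedBall_of_sqNorm_le hr.le hcon)
    have h₂ := mul_le_mul_of_nonneg_left (mul_pow_powerBarrier_le_one (m := m) (w := w) hb) hl.le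
    nlinarith [mul_pos hlb he]
  have hw4' : sqNorm w < 4 := by
    refine hw4.lt_of_ne fun h4 => (hpos w).not_gt ?_
    simpa [powerBarrier, h4, e] using hlt
  refine ⟨mem_of_superset ((isOpen_lt continuous_sqNorm continuous_const).mem_nhds hw4')
    fun w (hw : sqNorm w < 4) => hw.le, ?_⟩
  have hsub := mul_lt_mul_of_pos_left (mul_powerBarrier_lt_layeredLaplacian hE
    (hheight w hw4) hk hb hb1 hm hbw.le hw4) hlb
  rw [layeredLaplacian_const_mul, layeredLaplacian_sub hg contDiff_const, layeredLaplacian_const,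
    hu.eq, sub_zero]
  nlinarith [mul_nonneg hk (sub_nonneg.2 hlt.le), mul_nonneg hk (mul_pos hlb he).le]

end IsLayeredEigen

section WeightedMax

variable {E : Type*} [SeminormedAddCommGroup E] {u : E → ℝ} {n : ℕ} {P : E}

lemma exists_weighted_max [ProperSpace E] (hu : Continuous u) (h₀ : 0 < u 0) (hn : n ≠ 0) :
    ∃ P, ‖P‖ < 1 ∧ ∀ w, ‖w‖ ≤ 1 → (1 - ‖w‖) ^ n * u w ≤ (1 - ‖P‖) ^ n * u P := by
  obtain ⟨P, hP, hmax⟩ := (isCompact_closedBall (0 : E) 1).exists_isMaxOn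
    ⟨0, Metric.mem_closedBall_self zero_le_one⟩
    (f := fun w => (1 - ‖w‖) ^ n * u w) (by fun_prop)
  refine ⟨P, (mem_closedBall_zero_iff.1 hP).lt_of_ne fun h => h₀.not_ge ?_,
    fun w hw => hmax (mem_closedBall_zero_iff.2 hw)⟩
  simpa [h, hn] using hmax (Metric.mem_closedBall_self zero_le_one)

lemma le_two_pow_mul_of_weighted_max (hu : ∀ w, 0 ≤ u w) (hP : ‖P‖ < 1)
    (hmax : ∀ w, ‖w‖ ≤ 1 → (1 - ‖w‖) ^ n * u w ≤ (1 - ‖P‖) ^ n * u P) {w : E}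
    (hw : w ∈ Metric.closedBall P ((1 - ‖P‖) / 2)) : u w ≤ 2 ^ n * u P := by
  set d := (1 - ‖P‖) / 2
  have hd : 0 < d := by simp only [d]; linarith
  have hPd : 1 - ‖P‖ = 2 * d := by simp only [d]; ring
  have hwd : d ≤ 1 - ‖w‖ := by
    linarith [norm_le_norm_add_norm_sub' w P, mem_closedBall_iff_norm.1 hw]
  refine le_of_mul_le_mul_left ?_ (pow_pos hd n)
  calc d ^ n * u w ≤ (1 - ‖w‖) ^ n * u w :=
        mul_le_mul_of_nonneg_right (pow_le_pow_left₀ hd.le hwd n) (hu w)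
    _ ≤ (2 * d) ^ n * u P := hPd ▸ hmax w (by linarith)
    _ = d ^ n * (2 ^ n * u P) := by rw [mul_pow]; ring

end WeightedMax

namespace IsLayeredEigen

variable {Θ k N d : ℝ} {α β : ℝ → ℝ} {u : ℝ × ℝ × ℝ → ℝ} {P : ℝ × ℝ × ℝ}

lemma half_mul_le_on_closedBall (hd : 0 < d) (hd1 : d ≤ 1)
    (hE : EllipticOn Θ α β (Metric.closedBall P.2.2 (2 * d))) (hk : 0 ≤ k)
    (hu : IsLayeredEigen α β k u) (hP : 0 < u P) (hN : 1 ≤ N)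
    (hb : ∀ w ∈ Metric.closedBall P d, |u w| ≤ N * u P) :
    ∀ w ∈ Metric.closedBall P (d / (4 * gradientConst Θ k * N)), 1 / 2 * u P ≤ u w := by
  set G := gradientConst Θ k
  have hG : 1 ≤ G := one_le_gradientConst hE.pos.le hk
  have hr : d / (4 * G * N) ≤ d / 2 := div_le_div_of_nonneg_left hd.le two_pos (by nlinarith)
  intro w hw
  have hgrad : ∀ v ∈ Metric.closedBall P (d / (4 * G * N)),
      ‖fderiv ℝ u v‖ ≤ G * (N * u P / (d / 2)) := by
    intro v hv
    have hvd : dist v P ≤ d / 2 := hv.trans hr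
    have hvz : dist v.2.2 P.2.2 ≤ d / 2 :=
      ((le_max_right _ _).trans (le_max_right _ _)).trans hvd
    refine hu.norm_fderiv_le (by positivity) (by linarith)
      (hE.mono (Metric.closedBall_subset_closedBall' (by linarith))) hk (by positivity)
      fun w hw => hb w (Metric.closedBall_subset_closedBall' (by linarith) hw)
  have hlip := (convex_closedBall P _).norm_image_sub_le_of_norm_fderiv_le
    (fun v _ => hu.contDiff.differentiable (by norm_num) v) hgrad
    (Metric.mem_closedBall_self (by positivity)) hw
  have hdrop : G * (N * u P / (d / 2)) * ‖w - P‖ ≤ 1 / 2 * u P := calc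
    _ ≤ G * (N * u P / (d / 2)) * (d / (4 * G * N)) :=
      mul_le_mul_of_nonneg_left (mem_closedBall_iff_norm.1 hw) (by positivity)
    _ = 1 / 2 * u P := by field_simp; norm_num
  linarith [(abs_le.1 (hlip.trans hdrop)).1]

lemma mul_pow_le_zero_of_le_on_closedBall {m : ℕ}
    (hE : EllipticOn Θ α β (Metric.closedBall 0 3)) (hk : 0 ≤ k)
    (hm : Θ * (3 * Θ + 5 * k + 1) ≤ m + 1) (hu : IsLayeredEigen α β k u) (hpos : ∀ w, 0 < u w)
    (hP : ‖P‖ ≤ 1) {r l : ℝ} (hr : 0 < r) (hr1 : r ≤ 1) (hl : 0 < l)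
    (hlu : ∀ w ∈ Metric.closedBall P r, l ≤ u w) :
    l * (r ^ 2) ^ m * (1 / 5 * (1 / 4) ^ m) ≤ u 0 := by
  have hPz : |P.2.2| ≤ 1 := ((norm_snd_le P.2).trans (norm_snd_le P)).trans hP
  have hPx : |P.1| ≤ 1 := (norm_fst_le P).trans hP
  have hPy : |P.2.1| ≤ 1 := ((norm_fst_le P.2).trans (norm_snd_le P)).trans hP
  have hE' : EllipticOn Θ (fun z => α (P.2.2 + 1 * z)) (fun z => β (P.2.2 + 1 * z))
      (Metric.closedBall 0 2) := hE.comp fun z hz => by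
    rw [mem_closedBall_zero_iff, norm_eq_abs] at hz ⊢
    rw [one_mul]
    linarith [abs_add_le P.2.2 z]
  have hsq : sqNorm (-P) ≤ 3 := by
    simp only [sqNorm, Prod.fst_neg, Prod.snd_neg, neg_sq]
    linarith [(sq_le_one_iff_abs_le_one _).2 hPx, (sq_le_one_iff_abs_le_one _).2 hPy,
      (sq_le_one_iff_abs_le_one _).2 hPz]
  have key := (hu.rescale P 1).mul_pow_le_of_le_on_closedBall hE' (by linarith) (by linarith)
    (fun w => hpos _) hr hr1 hl (fun w hw => hlu _ ?_) hsq
  · simpa using key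
  · simpa using hw

/-- The loss factor when a lower bound `1 / 2 * u P` on a ball of radius `d / (4 * G * 4 ^ m)`,
with `G` the constant of the gradient estimate, is carried to the origin by `powerBarrier`. -/
noncomputable def spreadConst (Θ k : ℝ) (m : ℕ) : ℝ :=
  1 / 2 * ((1 / (4 * gradientConst Θ k * 4 ^ m)) ^ 2) ^ m * (1 / 5 * (1 / 4) ^ m)

lemma spreadConst_pos (hΘ : 0 ≤ Θ) (hk : 0 ≤ k) (m : ℕ) : 0 < spreadConst Θ k m := by
  have := one_le_gradientConst hΘ hk
  unfold spreadConst
  positivity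

lemma exists_ball_half_le {m : ℕ} (hm : m ≠ 0) (hE : EllipticOn Θ α β (Metric.closedBall 0 3))
    (hk : 0 ≤ k) (hu : IsLayeredEigen α β k u) (hpos : ∀ w, 0 < u w) :
    ∃ P d, ‖P‖ ≤ 1 ∧ 0 < d ∧ d ≤ 1 ∧
      (∀ w, ‖w‖ ≤ 1 / 2 → u w ≤ 4 ^ m * 4 ^ m * ((d ^ 2) ^ m * u P)) ∧
      ∀ w ∈ Metric.closedBall P (d / (4 * gradientConst Θ k * 4 ^ m)), 1 / 2 * u P ≤ u w := by
  obtain ⟨P, hP, hmax⟩ := exists_weighted_max (n := 2 * m) hu.contDiff.continuous (hpos 0)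
    (by positivity)
  have hPz : |P.2.2| ≤ 1 := ((norm_snd_le P.2).trans (norm_snd_le P)).trans hP.le
  have h4 : (2 : ℝ) ^ (2 * m) = 4 ^ m := by rw [pow_mul]; norm_num
  refine ⟨P, (1 - ‖P‖) / 2, hP.le, by linarith, by linarith [norm_nonneg P], fun w hw => ?_, ?_⟩
  · have hweight : (1 / 2) ^ (2 * m) * u w ≤ (1 - ‖w‖) ^ (2 * m) * u w :=
      mul_le_mul_of_nonneg_right (pow_le_pow_left₀ (by norm_num) (by linarith) _) (hpos w).le
    calc u w = 2 ^ (2 * m) * ((1 / 2) ^ (2 * m) * u w) := by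
          rw [← mul_assoc, ← mul_pow]; norm_num
      _ ≤ 2 ^ (2 * m) * ((1 - ‖P‖) ^ (2 * m) * u P) :=
          mul_le_mul_of_nonneg_left (hweight.trans (hmax w (by linarith))) (by positivity)
      _ = 4 ^ m * 4 ^ m * ((((1 - ‖P‖) / 2) ^ 2) ^ m * u P) := by
          rw [show 1 - ‖P‖ = 2 * ((1 - ‖P‖) / 2) by ring, mul_pow, h4, ← pow_mul]
          ring_nf
  · refine hu.half_mul_le_on_closedBall (by linarith) (by linarith [norm_nonneg P]) (hE.mono
      (Metric.closedBall_subset_closedBall' ?_)) hk (hpos P) (one_le_pow₀ (by norm_num))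
      fun w hw => ?_
    · rw [dist_zero_right, norm_eq_abs]
      linarith [norm_nonneg P]
    · rw [abs_of_pos (hpos w), ← h4]
      exact le_two_pow_mul_of_weighted_max (fun w => (hpos w).le) hP hmax hw

-- The lower bound spread from a ball of radius `r` loses a factor `(r ^ 2) ^ m`. Taking for its
-- centre a maximum of `(1 - ‖w‖) ^ (2 * m) * u w` compensates this loss, however close the maximum
-- is to the unit sphere.
lemma harnack {m : ℕ} (hE : EllipticOn Θ α β (Metric.closedBall 0 3)) (hk : 0 ≤ k)
    (hm : Θ * (3 * Θ + 5 * k + 1) ≤ m + 1) (hu : IsLayeredEigen α β k u) (hpos : ∀ w, 0 < u w)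
    {w : ℝ × ℝ × ℝ} (hw : ‖w‖ ≤ 1 / 2) : u w ≤ 4 ^ m * 4 ^ m / spreadConst Θ k m * u 0 := by
  have hG : 1 ≤ gradientConst Θ k := one_le_gradientConst hE.pos.le hk
  have hδ := spreadConst_pos hE.pos.le hk m
  have hm0 : m ≠ 0 := by rintro rfl; push_cast at hm; nlinarith [hE.one_le]
  obtain ⟨P, d, hP, hd, hd1, hupper, hball⟩ := hu.exists_ball_half_le hm0 hE hk hpos
  have hG4 : 1 ≤ 4 * gradientConst Θ k * 4 ^ m :=
    one_le_mul_of_one_le_of_one_le (by linarith) (one_le_pow₀ (by norm_num))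
  have hzero := hu.mul_pow_le_zero_of_le_on_closedBall hE hk hm hpos hP (by positivity)
    ((div_le_self hd.le hG4).trans hd1) (mul_pos (by norm_num) (hpos P)) hball
  calc u w ≤ 4 ^ m * 4 ^ m * ((d ^ 2) ^ m * u P) := hupper w hw
    _ = 4 ^ m * 4 ^ m / spreadConst Θ k m * (spreadConst Θ k m * ((d ^ 2) ^ m * u P)) := by
        field_simp
    _ ≤ 4 ^ m * 4 ^ m / spreadConst Θ k m * u 0 := by
        refine mul_le_mul_of_nonneg_left (le_trans (le_of_eq ?_) hzero) (by positivity)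
        rw [spreadConst, div_eq_mul_one_div d, mul_pow d, mul_pow (d ^ 2)]
        ring

lemma exists_norm_fderiv_zero_le_mul (hΘ : 0 ≤ Θ) (hk : 0 ≤ k) :
    ∃ C, 0 < C ∧ ∀ {α β u}, EllipticOn Θ α β (Metric.closedBall 0 3) →
      IsLayeredEigen α β k u → (∀ w, 0 < u w) → ‖fderiv ℝ u 0‖ ≤ C * u 0 := by
  obtain ⟨m, hm⟩ := exists_nat_ge (Θ * (3 * Θ + 5 * k + 1))
  have hδ := spreadConst_pos hΘ hk m
  have hG := one_le_gradientConst hΘ hk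
  refine ⟨gradientConst Θ k * (4 ^ m * 4 ^ m / spreadConst Θ k m * 2), by positivity,
    fun {α β u} hE hu hpos => ?_⟩
  have h₀ := hpos 0
  have h := hu.norm_fderiv_le (c := 0) (d := 1 / 2) (by norm_num) (by norm_num)
    (hE.mono (Metric.closedBall_subset_closedBall (by norm_num))) hk
    (M := 4 ^ m * 4 ^ m / spreadConst Θ k m * u 0) (by positivity) fun w hw => by
      rw [abs_of_pos (hpos w)]
      exact hu.harnack hE hk (by linarith) hpos (mem_closedBall_zero_iff.1 hw)
  refine h.trans (le_of_eq ?_)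
  ring

end IsLayeredEigen

/-! ### A Phragmén–Lindelöf principle in slabs -/

/-- Subexponential growth in the horizontal directions, uniformly in the slab `|z| ≤ Z`. -/
def SubexpGrowth (Z : ℝ) (v : ℝ × ℝ × ℝ → ℝ) : Prop :=
  ∀ δ > 0, ∃ K, ∀ w : ℝ × ℝ × ℝ, |w.2.2| ≤ Z → v w ≤ K * exp (δ * (|w.1| + |w.2.1|))

lemma SubexpGrowth.mono {Z : ℝ} {v v' : ℝ × ℝ × ℝ → ℝ} (hv : SubexpGrowth Z v)
    (h : ∀ w, v' w ≤ v w) : SubexpGrowth Z v' := fun δ hδ => by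
  obtain ⟨K, hK⟩ := hv δ hδ
  exact ⟨K, fun w hw => (h w).trans (hK w hw)⟩

section SlabBarrier

variable {b Z Θ : ℝ} {α β : ℝ → ℝ} {w : ℝ × ℝ × ℝ} {v : ℝ × ℝ × ℝ → ℝ}

/-- A positive function in the slab `|z| ≤ Z`, exponentially growing in the horizontal directions,
which is a strict supersolution for small `b`. -/
noncomputable def slabBarrier (b Z : ℝ) (w : ℝ × ℝ × ℝ) : ℝ :=
  (cosh (b * w.1) + cosh (b * w.2.1)) * cos (w.2.2 / Z)

lemma contDiff_slabBarrier : ContDiff ℝ 2 (slabBarrier b Z) := by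
  have h₁ := Real.contDiff_cosh (n := 2)
  have h₂ := Real.contDiff_cos (n := 2)
  exact ((h₁.comp (by fun_prop)).add (h₁.comp (by fun_prop))).mul (h₂.comp (by fun_prop))

lemma layeredLaplacian_slabBarrier :
    layeredLaplacian α β (slabBarrier b Z) w =
      ((b ^ 2 * α w.2.2 - Z⁻¹ ^ 2) * cosh (b * w.1)
        + (b ^ 2 * β w.2.2 - Z⁻¹ ^ 2) * cosh (b * w.2.1)) * cos (w.2.2 / Z) := by
  have hlin (a t : ℝ) : HasDerivAt (fun t => a * t) a t := by
    simpa using (hasDerivAt_id t).const_mul a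
  have hcosh (c d t : ℝ) :
      iteratedDeriv 2 (fun t => (cosh (b * t) + c) * d) t = b ^ 2 * cosh (b * t) * d := by
    refine iteratedDeriv_two_eq_of_hasDerivAt (f' := fun t => b * sinh (b * t) * d)
      (fun s => ?_) ?_
    · exact (((hlin b s).cosh.add_const c).mul_const d).congr_deriv (by ring)
    · exact (((hlin b t).sinh.const_mul b).mul_const d).congr_deriv (by ring)
  have hcos (c t : ℝ) :
      iteratedDeriv 2 (fun t => c * cos (Z⁻¹ * t)) t = -(Z⁻¹ ^ 2 * (c * cos (Z⁻¹ * t))) := by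
    refine iteratedDeriv_two_eq_of_hasDerivAt (f' := fun t => c * (-sin (Z⁻¹ * t) * Z⁻¹))
      (fun s => (hlin Z⁻¹ s).cos.const_mul c) ?_
    exact (((hlin Z⁻¹ t).sin.fun_neg.mul_const Z⁻¹).const_mul c).congr_deriv (by ring)
  have hcosh' := hcosh (cosh (b * w.1)) (cos (Z⁻¹ * w.2.2)) w.2.1
  simp only [add_comm _ (cosh (b * w.1))] at hcosh'
  simp only [layeredLaplacian, slabBarrier, div_eq_inv_mul]
  rw [hcosh, hcosh', hcos]
  ring

lemma half_le_cos_div {z : ℝ} (hz : |z| ≤ Z) : 1 / 2 ≤ cos (z / Z) := by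
  have h : |z / Z| ≤ 1 := by
    rw [abs_div]
    exact div_le_one_of_le₀ (hz.trans (le_abs_self Z)) (abs_nonneg Z)
  linarith [one_sub_sq_div_two_le_cos (x := z / Z), (sq_le_one_iff_abs_le_one _).2 h]

lemma layeredLaplacian_slabBarrier_neg (hE : EllipticOn Θ α β (Metric.closedBall 0 Z))
    (hb : b ^ 2 * Θ < Z⁻¹ ^ 2) (hw : |w.2.2| ≤ Z) :
    layeredLaplacian α β (slabBarrier b Z) w < 0 := by
  rw [layeredLaplacian_slabBarrier]
  have hz : w.2.2 ∈ Metric.closedBall 0 Z := mem_closedBall_zero_iff.2 hw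
  have hα := mul_le_mul_of_nonneg_left (hE.fst_le _ hz) (sq_nonneg b)
  have hβ := mul_le_mul_of_nonneg_left (hE.snd_le _ hz) (sq_nonneg b)
  exact mul_neg_of_neg_of_pos (add_neg
    (mul_neg_of_neg_of_pos (by linarith) (cosh_pos _))
    (mul_neg_of_neg_of_pos (by linarith) (cosh_pos _))) (by linarith [half_le_cos_div hw])

lemma le_slabBarrier (hb : 0 < b) (hw : |w.2.2| ≤ Z) :
    1 / 4 * (exp (b * |w.1|) + exp (b * |w.2.1|)) ≤ slabBarrier b Z w := by
  have hexp (t : ℝ) : exp (b * |t|) / 2 ≤ cosh (b * t) := by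
    rw [← cosh_abs (b * t), abs_mul, abs_of_pos hb, cosh_eq]
    linarith [exp_pos (-(b * |t|))]
  have h := mul_le_mul (add_le_add (hexp w.1) (hexp w.2.1)) (half_le_cos_div hw) (by norm_num)
    (add_pos (cosh_pos _) (cosh_pos _)).le
  unfold slabBarrier
  linarith

lemma slabBarrier_pos (hb : 0 < b) (hw : |w.2.2| ≤ Z) : 0 < slabBarrier b Z w :=
  lt_of_lt_of_le (by positivity) (le_slabBarrier hb hw)

lemma SubexpGrowth.eventually_le_mul_slabBarrier (hv : SubexpGrowth Z v) (hb : 0 < b) {τ : ℝ}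
    (hτ : 0 < τ) : ∀ᶠ R in atTop, ∀ w : ℝ × ℝ × ℝ, |w.1| ≤ R → |w.2.1| ≤ R → |w.2.2| ≤ Z →
      |w.1| = R ∨ |w.2.1| = R → v w ≤ τ * slabBarrier b Z w := by
  obtain ⟨K, hK⟩ := hv (b / 4) (by positivity)
  have htend : Tendsto (fun R => exp (b / 2 * R)) atTop atTop :=
    tendsto_exp_atTop.comp (tendsto_id.const_mul_atTop (by positivity))
  filter_upwards [htend.eventually_ge_atTop (4 * |K| / τ)] with R hR w hx hy hz hside
  have hfast : exp (b / 2 * R) * exp (b / 2 * R) ≤ exp (b * |w.1|) + exp (b * |w.2.1|) := by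
    rw [← exp_add, ← add_mul, add_halves]
    rcases hside with h | h <;> rw [h]
    · exact le_add_of_nonneg_right (exp_pos _).le
    · exact le_add_of_nonneg_left (exp_pos _).le
  rw [div_le_iff₀ hτ] at hR
  calc v w ≤ K * exp (b / 4 * (|w.1| + |w.2.1|)) := hK w hz
    _ ≤ |K| * exp (b / 2 * R) := by
        refine mul_le_mul (le_abs_self K) (exp_le_exp.2 ?_) (exp_pos _).le (abs_nonneg K)
        nlinarith
    _ ≤ τ * (1 / 4 * (exp (b / 2 * R) * exp (b / 2 * R))) := by nlinarith [exp_pos (b / 2 * R)]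
    _ ≤ τ * slabBarrier b Z w := by
        gcongr
        linarith [le_slabBarrier hb hz]

end SlabBarrier

namespace IsLayeredEigen

variable {b Z Θ k : ℝ} {α β : ℝ → ℝ} {v : ℝ × ℝ × ℝ → ℝ}

lemma le_mul_slabBarrier (hb : 0 < b) (hbZ : b ^ 2 * Θ < Z⁻¹ ^ 2)
    (hE : EllipticOn Θ α β (Metric.closedBall 0 Z)) (hk : 0 ≤ k) (hv : IsLayeredEigen α β k v)
    (hgrow : SubexpGrowth Z v) (hbd : ∀ w : ℝ × ℝ × ℝ, |w.2.2| = Z → v w ≤ 0) {τ : ℝ}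
    (hτ : 0 < τ) {w : ℝ × ℝ × ℝ} (hw : |w.2.2| ≤ Z) : v w ≤ τ * slabBarrier b Z w := by
  obtain ⟨R, hside, hwx, hwy⟩ := ((hgrow.eventually_le_mul_slabBarrier hb hτ).and
    ((eventually_ge_atTop |w.1|).and (eventually_ge_atTop |w.2.1|))).exists
  have hK : IsCompact {w : ℝ × ℝ × ℝ | |w.1| ≤ R ∧ |w.2.1| ≤ R ∧ |w.2.2| ≤ Z} := by
    convert (isCompact_Icc (a := -R) (b := R)).prod
      ((isCompact_Icc (a := -R) (b := R)).prod (isCompact_Icc (a := -Z) (b := Z))) using 1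
    ext w
    simp only [mem_ofPred_eq, mem_prod, mem_Icc, abs_le]
  refine le_of_layeredLaplacian_lt hK
    (fun w hw => (hE.fst_pos (mem_closedBall_zero_iff.2 hw.2.2)).le)
    (fun w hw => (hE.snd_pos (mem_closedBall_zero_iff.2 hw.2.2)).le) hv.contDiff
    (contDiff_const.mul contDiff_slabBarrier) ?_ w ⟨hwx, hwy, hw⟩
  rintro w ⟨hx, hy, hz⟩ hlt
  have hpos := mul_pos hτ (slabBarrier_pos hb hz)
  have hx' : |w.1| < R := hx.lt_of_ne fun h => hlt.not_ge (hside w hx hy hz (Or.inl h))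
  have hy' : |w.2.1| < R := hy.lt_of_ne fun h => hlt.not_ge (hside w hx hy hz (Or.inr h))
  have hz' : |w.2.2| < Z := hz.lt_of_ne fun h => by linarith [hbd w h]
  refine ⟨?_, ?_⟩
  · filter_upwards [(continuous_abs.comp continuous_fst).continuousAt.eventually_lt_const hx',
      (continuous_abs.comp continuous_snd.fst).continuousAt.eventually_lt_const hy',
      (continuous_abs.comp continuous_snd.snd).continuousAt.eventually_lt_const hz']
      with w hx hy hz using ⟨hx.le, hy.le, hz.le⟩
  · rw [layeredLaplacian_const_mul, hv.eq]
    exact (mul_neg_of_pos_of_neg hτ (layeredLaplacian_slabBarrier_neg hE hbZ hz)).trans_le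
      (mul_nonneg hk (hpos.trans hlt).le)

lemma nonpos_of_subexpGrowth (hZ : 0 < Z) (hE : EllipticOn Θ α β (Metric.closedBall 0 Z))
    (hk : 0 ≤ k) (hv : IsLayeredEigen α β k v) (hgrow : SubexpGrowth Z v)
    (hbd : ∀ w : ℝ × ℝ × ℝ, |w.2.2| = Z → v w ≤ 0) {w : ℝ × ℝ × ℝ} (hw : |w.2.2| ≤ Z) :
    v w ≤ 0 := by
  have hΘ := hE.pos
  set b := Z⁻¹ / (Θ + 1)
  have hb : 0 < b := by positivity
  have hbZ : b ^ 2 * Θ < Z⁻¹ ^ 2 := by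
    rw [div_pow, div_mul_eq_mul_div, div_lt_iff₀ (by positivity)]
    gcongr
    nlinarith
  have hg := slabBarrier_pos hb hw
  refine le_of_forall_pos_le_add fun ε hε => ?_
  have h := hv.le_mul_slabBarrier hb hbZ hE hk hgrow hbd (div_pos hε hg) hw
  rwa [div_mul_cancel₀ _ hg.ne', ← zero_add ε] at h

end IsLayeredEigen

/-! ### Positive eigenfunctions on `Sol(p,q)` -/

/-- `C²` solutions of `e^{2pz} u_xx + e^{-2qz} u_yy + u_zz = k u`, that is, eigenfunctions of twice
the driftless Laplacian of `Sol(p,q)`. -/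
abbrev IsDriftlessSolEigen (p q k : ℝ) (u : ℝ × ℝ × ℝ → ℝ) : Prop :=
  IsLayeredEigen (fun z => exp (2 * p * z)) (fun z => exp (-(2 * q * z))) k u

/-- `u` is log-Lipschitz with constant `C` for the left-invariant metric of `Sol(p,q)`, in each of
the coordinate directions. -/
structure IsLogLipschitz (p q C : ℝ) (u : ℝ × ℝ × ℝ → ℝ) : Prop where
  fst : ∀ x x' y z, u (x', y, z) ≤ u (x, y, z) * exp (C * exp (-(p * z)) * |x' - x|)
  snd : ∀ x y y' z, u (x, y', z) ≤ u (x, y, z) * exp (C * exp (q * z) * |y' - y|)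
  height : ∀ x y z z', u (x, y, z') ≤ u (x, y, z) * exp (C * |z' - z|)

lemma ellipticOn_exp {p q Z : ℝ} (hp : 0 ≤ p) (hq : 0 ≤ q) (hZ : 0 ≤ Z) :
    EllipticOn (exp (2 * (p + q) * Z)) (fun z => exp (2 * p * z)) (fun z => exp (-(2 * q * z)))
      (Metric.closedBall 0 Z) := by
  have hbd {r z : ℝ} (hr : 0 ≤ r) (hz : z ∈ Metric.closedBall 0 Z) :
      -(r * Z) ≤ r * z ∧ r * z ≤ r * Z := by
    have h := abs_le.1 (mem_closedBall_zero_iff.1 hz)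
    constructor <;> nlinarith
  refine ⟨one_le_exp (by positivity), fun z hz => exp_le_exp.2 ?_, fun z hz => exp_le_exp.2 ?_,
    fun z hz => ?_, fun z hz => ?_⟩
  all_goals
    have hpz := hbd hp hz
    have hqz := hbd hq hz
    have := mul_nonneg hp hZ
    have := mul_nonneg hq hZ
    first
    | linarith
    | rw [← exp_add]
      exact one_le_exp (by linarith)

lemma exp_log_div_cancel {C δ r : ℝ} (hC : 0 < C) (hδ : 0 < δ) (hr : r ≠ 0) :
    C * exp (-(r * (log (C / δ) / r))) = δ := by
  rw [mul_div_cancel₀ _ hr, exp_neg, exp_log (by positivity)]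
  field_simp

lemma abs_sub_le_of_le_mul {a a' e : ℝ} (h : a' ≤ a * e) (h' : a ≤ a' * e) (he : 1 ≤ e) :
    |a' - a| ≤ (e - 1) * a := by
  refine abs_le.2 ⟨?_, by linarith⟩
  rcases le_total a a' with h₁ | h₁ <;> nlinarith

namespace IsLogLipschitz

variable {p q C : ℝ} {u : ℝ × ℝ × ℝ → ℝ}

lemma flip (hu : IsLogLipschitz p q C u) :
    IsLogLipschitz q p C (fun w => u (w.2.1, w.1, -w.2.2)) where
  fst x x' y z := by simpa using hu.snd y x x' (-z)
  snd x y y' z := by simpa using hu.fst y y' x (-z)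
  height x y z z' := by
    simpa [neg_add_eq_sub, abs_sub_comm] using hu.height y x (-z) (-z')

-- Move horizontally at the heights where the metric makes the rate equal to `δ`.
lemma subexpGrowth (hp : p ≠ 0) (hq : q ≠ 0) (hC : 0 < C) (hu : IsLogLipschitz p q C u)
    (hpos : ∀ w, 0 < u w) (Z : ℝ) : SubexpGrowth Z u := by
  intro δ hδ
  set z₁ := log (C / δ) / p
  set z₂ := -(log (C / δ) / q)
  refine ⟨u (0, 0, z₂) * exp (C * |z₁ - z₂|) * exp (C * (Z + |z₁|)), ?_⟩
  rintro ⟨x, y, z⟩ hz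
  have hy : u (0, y, z₂) ≤ u (0, 0, z₂) * exp (δ * |y|) := by
    have h := hu.snd 0 0 y z₂
    rwa [mul_neg, exp_log_div_cancel hC hδ hq, sub_zero] at h
  have hx : u (x, y, z₁) ≤ u (0, y, z₁) * exp (δ * |x|) := by
    have h := hu.fst 0 x y z₁
    rwa [exp_log_div_cancel hC hδ hp, sub_zero] at h
  have hheight : u (x, y, z) ≤ u (x, y, z₁) * exp (C * (Z + |z₁|)) := by
    refine (hu.height x y z₁ z).trans (mul_le_mul_of_nonneg_left ?_ (hpos _).le)
    gcongr
    exact (abs_sub z z₁).trans (add_le_add_left hz _)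
  calc u (x, y, z) ≤ u (x, y, z₁) * exp (C * (Z + |z₁|)) := hheight
    _ ≤ u (0, y, z₁) * exp (δ * |x|) * exp (C * (Z + |z₁|)) := by gcongr
    _ ≤ u (0, y, z₂) * exp (C * |z₁ - z₂|) * exp (δ * |x|) * exp (C * (Z + |z₁|)) := by
        gcongr
        exact hu.height 0 y z₂ z₁
    _ ≤ u (0, 0, z₂) * exp (δ * |y|) * exp (C * |z₁ - z₂|) * exp (δ * |x|)
          * exp (C * (Z + |z₁|)) := by gcongr
    _ = _ := by rw [mul_add δ, exp_add]; ring

lemma eventually_abs_sub_fst_le (hp : 0 < p) (hC : 0 ≤ C) (hu : IsLogLipschitz p q C u)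
    (hpos : ∀ w, 0 < u w) (s : ℝ) {ε : ℝ} (hε : 0 < ε) :
    ∀ᶠ z in atTop, ∀ x y, |u (x + s, y, z) - u (x, y, z)| ≤ ε * u (x, y, z) := by
  have hrate : Tendsto (fun z => exp (-(p * z))) atTop (𝓝 0) :=
    tendsto_exp_neg_atTop_nhds_zero.comp (tendsto_id.const_mul_atTop hp)
  have hlim : Tendsto (fun z => exp (C * exp (-(p * z)) * |s|) - 1) atTop (𝓝 0) := by
    simpa using (((hrate.const_mul C).mul_const |s|).rexp).sub_const 1
  filter_upwards [hlim.eventually_le_const hε] with z hz x y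
  have hforth := hu.fst x (x + s) y z
  have hback := hu.fst (x + s) x y z
  rw [abs_sub_comm] at hback
  rw [add_sub_cancel_left] at hforth hback
  exact (abs_sub_le_of_le_mul hforth hback (one_le_exp (by positivity))).trans
    (mul_le_mul_of_nonneg_right hz (hpos _).le)

lemma eventually_abs_sub_snd_le (hq : 0 < q) (hC : 0 ≤ C) (hu : IsLogLipschitz p q C u)
    (hpos : ∀ w, 0 < u w) (t : ℝ) {ε : ℝ} (hε : 0 < ε) :
    ∀ᶠ z in atTop, ∀ x y, |u (x, y + t, -z) - u (x, y, -z)| ≤ ε * u (x, y, -z) :=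
  (hu.flip.eventually_abs_sub_fst_le hq hC (fun _ => hpos _) t hε).mono fun _ h x y => h y x

end IsLogLipschitz

namespace IsDriftlessSolEigen

variable {p q k : ℝ} {u v H : ℝ × ℝ × ℝ → ℝ}

lemma leftTranslate (hu : IsDriftlessSolEigen p q k u) (x y z : ℝ) :
    IsDriftlessSolEigen p q k
      (fun w => u (x + exp (p * z) * w.1, y + exp (-(q * z)) * w.2.1, z + w.2.2)) := by
  simpa using hu.comp_affine x y z (exp (p * z)) (exp (-(q * z))) 1
    (fun _ => by simp only [← exp_nat_mul, ← exp_add, one_pow, one_mul]; push_cast; ring_nf)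
    (fun _ => by simp only [← exp_nat_mul, ← exp_add, one_pow, one_mul]; push_cast; ring_nf)

theorem exists_abs_deriv_le (hp : 0 ≤ p) (hq : 0 ≤ q) (hk : 0 ≤ k) :
    ∃ C, 0 < C ∧ ∀ {u}, IsDriftlessSolEigen p q k u → (∀ w, 0 < u w) → ∀ x y z : ℝ,
      |deriv (fun t => u (t, y, z)) x| ≤ C * exp (-(p * z)) * u (x, y, z) ∧
      |deriv (fun t => u (x, t, z)) y| ≤ C * exp (q * z) * u (x, y, z) ∧
      |deriv (fun t => u (x, y, t)) z| ≤ C * u (x, y, z) := by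
  obtain ⟨C, hC0, hC⟩ := IsLayeredEigen.exists_norm_fderiv_zero_le_mul
    (exp_pos (2 * (p + q) * 3)).le hk
  refine ⟨C, hC0, fun {u} hu hpos x y z => ?_⟩
  have hv := hu.leftTranslate x y z
  have hgrad := hC (ellipticOn_exp hp hq (by norm_num)) hv fun w => hpos _
  have hd := hv.contDiff.differentiable two_ne_zero
  have hfst := (abs_deriv_comp_le_norm_fderiv (c := fun t => (t, 0, 0)) (t := 0) (hd _)
    ((hasDerivAt_id 0).prodMk (hasDerivAt_const _ _)) (by simp)).trans hgrad
  have hsnd := (abs_deriv_comp_le_norm_fderiv (c := fun t => (0, t, 0)) (t := 0) (hd _)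
    ((hasDerivAt_const _ _).prodMk ((hasDerivAt_id 0).prodMk (hasDerivAt_const _ _)))
    (by simp)).trans hgrad
  have hheight := (abs_deriv_comp_le_norm_fderiv (c := fun t => (0, 0, t)) (t := 0) (hd _)
    ((hasDerivAt_const _ _).prodMk ((hasDerivAt_const _ _).prodMk (hasDerivAt_id 0)))
    (by simp)).trans hgrad
  simp only [mul_zero, add_zero, Prod.fst_zero, Prod.snd_zero] at hfst hsnd hheight
  rw [deriv_comp_mul_left (exp (p * z)) (fun t => u (x + t, y, z)),
    deriv_comp_const_add (fun t => u (t, y, z)), smul_eq_mul, abs_mul, abs_of_pos (exp_pos _),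
    mul_zero, add_zero, ← le_div_iff₀' (exp_pos _)] at hfst
  rw [deriv_comp_mul_left (exp (-(q * z))) (fun t => u (x, y + t, z)),
    deriv_comp_const_add (fun t => u (x, t, z)), smul_eq_mul, abs_mul, abs_of_pos (exp_pos _),
    mul_zero, add_zero, exp_neg, ← div_eq_inv_mul, div_le_iff₀ (exp_pos _)] at hsnd
  rw [deriv_comp_const_add (fun t => u (x, y, t)), add_zero] at hheight
  exact ⟨by rwa [exp_neg, mul_right_comm, ← div_eq_mul_inv], by rwa [mul_right_comm], hheight⟩

theorem exists_isLogLipschitz (hp : 0 ≤ p) (hq : 0 ≤ q) (hk : 0 ≤ k) :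
    ∃ C, 0 < C ∧ ∀ {u}, IsDriftlessSolEigen p q k u → (∀ w, 0 < u w) → IsLogLipschitz p q C u := by
  obtain ⟨C, hC0, hC⟩ := exists_abs_deriv_le hp hq hk
  refine ⟨C, hC0, fun {u} hu hpos => ?_⟩
  have hd : Differentiable ℝ u := hu.contDiff.differentiable two_ne_zero
  exact ⟨fun x x' y z => le_mul_exp_of_abs_deriv_le (f := fun t => u (t, y, z))
      (by fun_prop) (fun _ => hpos _) (fun t => (hC hu hpos t y z).1) x x',
    fun x y y' z => le_mul_exp_of_abs_deriv_le (f := fun t => u (x, t, z))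
      (by fun_prop) (fun _ => hpos _) (fun t => (hC hu hpos x t z).2.1) y y',
    fun x y z z' => le_mul_exp_of_abs_deriv_le (f := fun t => u (x, y, t))
      (by fun_prop) (fun _ => hpos _) (fun t => (hC hu hpos x y t).2.2) z z'⟩

lemma subexpGrowth (hp : 0 < p) (hq : 0 < q) (hk : 0 ≤ k) (hu : IsDriftlessSolEigen p q k u)
    (hpos : ∀ w, 0 < u w) (Z : ℝ) : SubexpGrowth Z u := by
  obtain ⟨C, hC0, hC⟩ := exists_isLogLipschitz hp.le hq.le hk
  exact (hC hu hpos).subexpGrowth hp.ne' hq.ne' hC0 hpos Z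

lemma nonpos_of_le_of_eventually_le (hp : 0 < p) (hq : 0 < q) (hk : 0 ≤ k)
    (hv : IsDriftlessSolEigen p q k v) (hH : IsDriftlessSolEigen p q k H) (hpos : ∀ w, 0 < H w)
    (hvH : ∀ w, v w ≤ H w)
    (hbd : ∀ ε > 0, ∀ᶠ Z in atTop, ∀ w : ℝ × ℝ × ℝ, |w.2.2| = Z → v w ≤ ε * H w)
    (w : ℝ × ℝ × ℝ) : v w ≤ 0 := by
  have hsmall : ∀ ε > 0, v w ≤ ε * H w := fun ε hε => by
    obtain ⟨Z, hbdZ, hwZ, hZ⟩ := ((hbd ε hε).and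
      ((eventually_ge_atTop |w.2.2|).and (eventually_gt_atTop 0))).exists
    have hgrow := (subexpGrowth hp hq hk hH hpos Z).mono fun w =>
      (sub_le_self (v w) (mul_pos hε (hpos w)).le).trans (hvH w)
    exact sub_nonpos.1 ((hv.sub (hH.const_mul ε)).nonpos_of_subexpGrowth hZ
      (ellipticOn_exp hp.le hq.le hZ.le) hk hgrow (fun w hw => sub_nonpos.2 (hbdZ w hw)) hwZ)
  refine le_of_forall_pos_le_add fun ε hε => ?_
  have h := hsmall (ε / H w) (div_pos hε (hpos w))
  rwa [div_mul_cancel₀ _ (hpos w).ne', ← zero_add ε] at h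

end IsDriftlessSolEigen

/-! ### Additive separation of the horizontal variables -/

/-- The second difference of `u` in the two horizontal directions. -/
def mixedDiff (u : ℝ × ℝ × ℝ → ℝ) (s t : ℝ) (w : ℝ × ℝ × ℝ) : ℝ :=
  u (w.1 + s, w.2.1 + t, w.2.2) + u w - (u (w.1 + s, w.2.1, w.2.2) + u (w.1, w.2.1 + t, w.2.2))

/-- The sum of the four values entering `mixedDiff u s t w`. -/
def cornerSum (u : ℝ × ℝ × ℝ → ℝ) (s t : ℝ) (w : ℝ × ℝ × ℝ) : ℝ :=
  u (w.1 + s, w.2.1 + t, w.2.2) + u w + (u (w.1 + s, w.2.1, w.2.2) + u (w.1, w.2.1 + t, w.2.2))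

lemma abs_mixedDiff_le_cornerSum {u : ℝ × ℝ × ℝ → ℝ} (hpos : ∀ w, 0 < u w) (s t : ℝ)
    (w : ℝ × ℝ × ℝ) : |mixedDiff u s t w| ≤ cornerSum u s t w := by
  have h₁ := hpos (w.1 + s, w.2.1 + t, w.2.2)
  have h₂ := hpos (w.1 + s, w.2.1, w.2.2)
  have h₃ := hpos (w.1, w.2.1 + t, w.2.2)
  simp only [mixedDiff, cornerSum, abs_le]
  constructor <;> linarith [hpos w]

lemma IsLogLipschitz.eventually_abs_mixedDiff_le {p q C : ℝ} {u : ℝ × ℝ × ℝ → ℝ} (hp : 0 < p)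
    (hq : 0 < q) (hC : 0 ≤ C) (hu : IsLogLipschitz p q C u) (hpos : ∀ w, 0 < u w) (s t : ℝ) {ε : ℝ}
    (hε : 0 < ε) : ∀ᶠ Z in atTop, ∀ w : ℝ × ℝ × ℝ, |w.2.2| = Z →
      |mixedDiff u s t w| ≤ ε * cornerSum u s t w := by
  filter_upwards [hu.eventually_abs_sub_fst_le hp hC hpos s hε,
    hu.eventually_abs_sub_snd_le hq hC hpos t hε] with Z hfst hsnd
  rintro ⟨x, y, z⟩ hz
  have hcorner := mul_pos hε (hpos (x + s, y + t, z))
  simp only [mixedDiff, cornerSum]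
  rcases eq_or_eq_neg_of_abs_eq hz with rfl | rfl
  · have h₁ := abs_le.1 (hfst x y)
    have h₂ := abs_le.1 (hfst x (y + t))
    have h₃ := mul_pos hε (hpos (x + s, y, z))
    exact abs_le.2 ⟨by linarith [h₁.2, h₂.1], by linarith [h₁.1, h₂.2]⟩
  · have h₁ := abs_le.1 (hsnd x y)
    have h₂ := abs_le.1 (hsnd (x + s) y)
    have h₃ := mul_pos hε (hpos (x, y + t, -Z))
    exact abs_le.2 ⟨by linarith [h₁.2, h₂.1], by linarith [h₁.1, h₂.2]⟩

namespace IsDriftlessSolEigen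

variable {p q k : ℝ} {u : ℝ × ℝ × ℝ → ℝ}

protected lemma mixedDiff (hu : IsDriftlessSolEigen p q k u) (s t : ℝ) :
    IsDriftlessSolEigen p q k (mixedDiff u s t) := by
  have h := ((hu.translate s t).add hu).sub ((hu.translate s 0).add (hu.translate 0 t))
  simp only [add_zero] at h
  exact h

protected lemma cornerSum (hu : IsDriftlessSolEigen p q k u) (s t : ℝ) :
    IsDriftlessSolEigen p q k (cornerSum u s t) := by
  have h := ((hu.translate s t).add hu).add ((hu.translate s 0).add (hu.translate 0 t))
  simp only [add_zero] at h
  exact h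

theorem mixedDiff_eq_zero (hp : 0 < p) (hq : 0 < q) (hk : 0 ≤ k)
    (hu : IsDriftlessSolEigen p q k u) (hpos : ∀ w, 0 < u w) (s t : ℝ) (w : ℝ × ℝ × ℝ) :
    mixedDiff u s t w = 0 := by
  obtain ⟨C, hC0, hC⟩ := exists_isLogLipschitz hp.le hq.le hk
  have hle := abs_mixedDiff_le_cornerSum hpos s t
  have hcorner (w) : 0 < cornerSum u s t w :=
    add_pos (add_pos (hpos _) (hpos _)) (add_pos (hpos _) (hpos _))
  have hbd (ε : ℝ) (hε : 0 < ε) :=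
    (hC hu hpos).eventually_abs_mixedDiff_le hp hq hC0.le hpos s t hε
  refine le_antisymm ?_ (neg_nonpos.1 ?_)
  · exact nonpos_of_le_of_eventually_le hp hq hk (hu.mixedDiff s t) (hu.cornerSum s t) hcorner
      (fun w => (le_abs_self _).trans (hle w))
      (fun ε hε => (hbd ε hε).mono fun Z h w hw => (le_abs_self _).trans (h w hw)) w
  · rw [← neg_one_mul]
    refine nonpos_of_le_of_eventually_le hp hq hk ((hu.mixedDiff s t).const_mul (-1))
      (hu.cornerSum s t) hcorner (fun w => ?_)
      (fun ε hε => (hbd ε hε).mono fun Z h w hw => ?_) w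
    · exact (neg_one_mul (mixedDiff u s t w)).trans_le ((neg_le_abs _).trans (hle w))
    · exact (neg_one_mul (mixedDiff u s t w)).trans_le ((neg_le_abs _).trans (h w hw))

end IsDriftlessSolEigen

/-! ### Functions of the height -/

/-- The solution `cosh (√k z)` of `f'' = k f`, `f 0 = 1`, `f' 0 = 0`. -/
noncomputable def heightCosh (k z : ℝ) : ℝ := cosh (√k * z)

/-- The solution of `f'' = k f`, `f 0 = 0`, `f' 0 = 1`. The integral equals `sinh (√k z) / √k`
for `k > 0`, and makes sense for `k = 0` as well. -/
noncomputable def heightSinh (k z : ℝ) : ℝ := ∫ t in (0 : ℝ)..z, heightCosh k t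

/-- The solution of `f'' = k f` with `f 0 = v.1` and `f' 0 = v.2`. -/
noncomputable def heightSol (k : ℝ) (v : ℝ × ℝ) (z : ℝ) : ℝ :=
  v.1 * heightCosh k z + v.2 * heightSinh k z

lemma continuous_of_forall_hasDerivAt {f f' : ℝ → ℝ} (h : ∀ z, HasDerivAt f (f' z) z) :
    Continuous f :=
  continuous_iff_continuousAt.2 fun z => (h z).continuousAt

lemma contDiff_two_of_hasDerivAt {f f' f'' : ℝ → ℝ} (h₁ : ∀ z, HasDerivAt f (f' z) z)
    (h₂ : ∀ z, HasDerivAt f' (f'' z) z) (hc : Continuous f'') : ContDiff ℝ 2 f := by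
  have hd : deriv f = f' := funext fun z => (h₁ z).deriv
  have hd' : deriv f' = f'' := funext fun z => (h₂ z).deriv
  rw [← one_add_one_eq_two, contDiff_succ_iff_deriv, hd, contDiff_one_iff_deriv, hd']
  exact ⟨fun z => (h₁ z).differentiableAt, by simp, fun z => (h₂ z).differentiableAt, hc⟩

section HeightSol

variable {k : ℝ}

lemma heightCosh_pos (k z : ℝ) : 0 < heightCosh k z := cosh_pos _

lemma heightCosh_zero (k : ℝ) : heightCosh k 0 = 1 := by simp [heightCosh]

lemma heightCosh_neg (k z : ℝ) : heightCosh k (-z) = heightCosh k z := by simp [heightCosh]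

@[fun_prop]
lemma continuous_heightCosh (k : ℝ) : Continuous (heightCosh k) :=
  continuous_cosh.comp (continuous_const_mul _)

lemma heightSinh_zero (k : ℝ) : heightSinh k 0 = 0 := intervalIntegral.integral_same

lemma heightSinh_neg (k z : ℝ) : heightSinh k (-z) = -heightSinh k z := by
  have h := intervalIntegral.integral_comp_neg (a := 0) (b := z) (heightCosh k)
  rw [neg_zero] at h
  simp only [heightSinh]
  rw [intervalIntegral.integral_symm, ← h]
  simp only [heightCosh_neg]

lemma heightSinh_pos (k : ℝ) {z : ℝ} (hz : 0 < z) : 0 < heightSinh k z :=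
  intervalIntegral.intervalIntegral_pos_of_pos
    ((continuous_heightCosh k).intervalIntegrable _ _) (heightCosh_pos k) hz

lemma hasDerivAt_heightSinh (k z : ℝ) : HasDerivAt (heightSinh k) (heightCosh k z) z :=
  ((continuous_heightCosh k).integral_hasStrictDerivAt 0 z).hasDerivAt

@[fun_prop]
lemma continuous_heightSinh (k : ℝ) : Continuous (heightSinh k) :=
  continuous_of_forall_hasDerivAt (hasDerivAt_heightSinh k)

lemma sqrt_mul_heightSinh (k z : ℝ) : √k * heightSinh k z = sinh (√k * z) := by
  have hderiv (t : ℝ) : HasDerivAt (fun t => sinh (√k * t)) (√k * heightCosh k t) t := by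
    simpa [heightCosh, mul_comm] using ((hasDerivAt_id t).const_mul √k).sinh
  rw [heightSinh, ← intervalIntegral.integral_const_mul,
    intervalIntegral.integral_eq_sub_of_hasDerivAt (fun t _ => hderiv t)
      (((continuous_heightCosh k).const_mul √k).intervalIntegrable _ _)]
  simp

lemma hasDerivAt_heightCosh (hk : 0 ≤ k) (z : ℝ) :
    HasDerivAt (heightCosh k) (k * heightSinh k z) z := by
  refine (((hasDerivAt_id z).const_mul √k).cosh).congr_deriv ?_
  rw [id, ← sqrt_mul_heightSinh, mul_one, mul_right_comm, mul_self_sqrt hk]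

lemma heightCosh_sq_sub (hk : 0 ≤ k) (z : ℝ) :
    heightCosh k z ^ 2 - k * heightSinh k z ^ 2 = 1 := by
  nth_rw 2 [← sq_sqrt hk]
  rw [← mul_pow, sqrt_mul_heightSinh, heightCosh, cosh_sq_sub_sinh_sq]

lemma heightSol_neg (k : ℝ) (v : ℝ × ℝ) (z : ℝ) : heightSol k (-v) z = -heightSol k v z := by
  simp only [heightSol, Prod.fst_neg, Prod.snd_neg]
  ring

lemma continuous_heightSol (k : ℝ) (v : ℝ × ℝ) : Continuous (heightSol k v) := by
  unfold heightSol
  fun_prop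

lemma continuous_heightSol_apply (k z : ℝ) : Continuous fun v => heightSol k v z := by
  unfold heightSol
  fun_prop

lemma isLayeredEigen_heightSol (α β : ℝ → ℝ) (hk : 0 ≤ k) (v : ℝ × ℝ) :
    IsLayeredEigen α β k (fun w => heightSol k v w.2.2) := by
  have h₁ (z : ℝ) : HasDerivAt (heightSol k v)
      (v.1 * (k * heightSinh k z) + v.2 * heightCosh k z) z :=
    ((hasDerivAt_heightCosh hk z).const_mul v.1).fun_add ((hasDerivAt_heightSinh k z).const_mul v.2)
  have h₂ (z : ℝ) : HasDerivAt (fun z => v.1 * (k * heightSinh k z) + v.2 * heightCosh k z)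
      (k * heightSol k v z) z :=
    ((((hasDerivAt_heightSinh k z).const_mul k).const_mul v.1).fun_add
      ((hasDerivAt_heightCosh hk z).const_mul v.2)).congr_deriv (by unfold heightSol; ring)
  have hC := contDiff_two_of_hasDerivAt h₁ h₂ ((continuous_heightSol k v).const_mul k)
  refine ⟨hC.comp (by fun_prop), fun w => ?_⟩
  simp [layeredLaplacian, iteratedDeriv_const, iteratedDeriv_two_eq_of_hasDerivAt h₁ (h₂ w.2.2)]

lemma exists_heightSol_eq (k : ℝ) {Z : ℝ} (hZ : 0 < Z) (a b : ℝ) :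
    ∃ v, heightSol k v Z = a ∧ heightSol k v (-Z) = b := by
  have hc := heightCosh_pos k Z
  have hs := heightSinh_pos k hZ
  refine ⟨((a + b) / (2 * heightCosh k Z), (a - b) / (2 * heightSinh k Z)), ?_, ?_⟩
  · simp only [heightSol]
    field_simp
    ring
  · simp only [heightSol, heightCosh_neg, heightSinh_neg]
    field_simp
    ring

-- Variation of constants.
lemma exists_iteratedDeriv_two_eq_mul_add (hk : 0 ≤ k) {g : ℝ → ℝ} (hg : Continuous g) :
    ∃ f : ℝ → ℝ, ContDiff ℝ 2 f ∧ ∀ z, iteratedDeriv 2 f z = k * f z + g z := by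
  set c := heightCosh k
  set s := heightSinh k
  set P : ℝ → ℝ := fun z => ∫ t in (0 : ℝ)..z, c t * g t
  set Q : ℝ → ℝ := fun z => ∫ t in (0 : ℝ)..z, s t * g t
  have hc : ∀ z, HasDerivAt c (k * s z) z := hasDerivAt_heightCosh hk
  have hs : ∀ z, HasDerivAt s (c z) z := hasDerivAt_heightSinh k
  have hP : ∀ z, HasDerivAt P (c z * g z) z := fun z =>
    (((continuous_heightCosh k).mul hg).integral_hasStrictDerivAt 0 z).hasDerivAt
  have hQ : ∀ z, HasDerivAt Q (s z * g z) z := fun z =>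
    (((continuous_heightSinh k).mul hg).integral_hasStrictDerivAt 0 z).hasDerivAt
  have h₁ (z : ℝ) : HasDerivAt (fun z => s z * P z - c z * Q z) (c z * P z - k * s z * Q z) z :=
    (((hs z).fun_mul (hP z)).fun_sub ((hc z).fun_mul (hQ z))).congr_deriv (by ring)
  have h₂ (z : ℝ) : HasDerivAt (fun z => c z * P z - k * s z * Q z)
      (k * (s z * P z - c z * Q z) + g z) z :=
    (((hc z).fun_mul (hP z)).fun_sub (((hs z).const_mul k).fun_mul (hQ z))).congr_deriv
      (by linear_combination g z * heightCosh_sq_sub hk z)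
  exact ⟨_, contDiff_two_of_hasDerivAt h₁ h₂
      (((continuous_of_forall_hasDerivAt h₁).const_mul k).add hg),
    fun z => iteratedDeriv_two_eq_of_hasDerivAt h₁ (h₂ z)⟩

end HeightSol

lemma continuous_iteratedDeriv_two_snd {u : ℝ × ℝ × ℝ → ℝ} (hu : ContDiff ℝ 2 u) :
    Continuous (fun z => iteratedDeriv 2 (fun t => u (0, t, z)) 0) := by
  have hline (z t : ℝ) : HasDerivAt (fun t => ((0, t, z) : ℝ × ℝ × ℝ)) (0, 1, 0) t :=
    (hasDerivAt_const t 0).prodMk ((hasDerivAt_id t).prodMk (hasDerivAt_const t z))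
  set F : ℝ × ℝ × ℝ → ℝ := fun w => fderiv ℝ u w (0, 1, 0)
  have hF : ContDiff ℝ 1 F := (hu.fderiv_right (m := 1) (by norm_num)).clm_apply contDiff_const
  have h (z : ℝ) :
      iteratedDeriv 2 (fun t => u (0, t, z)) 0 = fderiv ℝ F (0, 0, z) (0, 1, 0) :=
    iteratedDeriv_two_eq_of_hasDerivAt (f' := fun t => F (0, t, z))
      (fun t => (hu.differentiable two_ne_zero _).hasFDerivAt.comp_hasDerivAt t (hline z t))
      ((hF.differentiable one_ne_zero _).hasFDerivAt.comp_hasDerivAt 0 (hline z 0))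
  simp only [h]
  exact ((hF.continuous_fderiv one_ne_zero).comp (by fun_prop)).clm_apply continuous_const

namespace IsLayeredEigen

variable {α β : ℝ → ℝ} {k : ℝ} {u : ℝ × ℝ × ℝ → ℝ}

-- `u (x, 0, z)` solves the equation up to `β z * u_yy`, which does not depend on `x` and is hence
-- cancelled by a function of the height.
theorem exists_add_of_mixedDiff_eq_zero (hβ : Continuous β) (hk : 0 ≤ k)
    (hu : IsLayeredEigen α β k u) (hmix : ∀ s t w, mixedDiff u s t w = 0) :
    ∃ A B : ℝ × ℝ → ℝ, IsLayeredEigen α β k (fun w => A (w.1, w.2.2)) ∧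
      IsLayeredEigen α β k (fun w => B (w.2.1, w.2.2)) ∧
      ∀ w, u w = A (w.1, w.2.2) + B (w.2.1, w.2.2) := by
  have hsep (x y z : ℝ) : u (x, y, z) = u (0, y, z) + (u (x, 0, z) - u (0, 0, z)) := by
    have h := hmix x y (0, 0, z)
    simp only [mixedDiff, zero_add] at h
    linarith
  have hC := hu.contDiff
  obtain ⟨f, hf, hf₂⟩ := exists_iteratedDeriv_two_eq_mul_add hk
    (g := fun z => -(β z * iteratedDeriv 2 (fun t => u (0, t, z)) 0))
    (by have := continuous_iteratedDeriv_two_snd hC; fun_prop)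
  have hyy (x z : ℝ) : iteratedDeriv 2 (fun t => u (x, t, z)) 0
      = iteratedDeriv 2 (fun t => u (0, t, z)) 0 := by
    rw [funext fun t => hsep x t z,
      iteratedDeriv_fun_add (by push_cast; fun_prop) (by push_cast; fun_prop)]
    simp [iteratedDeriv_const]
  have hA : IsLayeredEigen α β k (fun w => u (w.1, 0, w.2.2) - f w.2.2) := by
    refine ⟨by fun_prop, fun w => ?_⟩
    have heq := hu.eq (w.1, 0, w.2.2)
    simp only [layeredLaplacian, hyy] at heq
    simp only [layeredLaplacian]
    rw [iteratedDeriv_fun_sub (by push_cast; fun_prop) (by push_cast; fun_prop),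
      iteratedDeriv_fun_sub (by push_cast; fun_prop) (by push_cast; fun_prop),
      iteratedDeriv_fun_sub (by push_cast; fun_prop) (by push_cast; fun_prop), hf₂]
    simp only [iteratedDeriv_const, OfNat.ofNat_ne_zero, if_false]
    linarith
  have hB := hu.sub hA
  simp only [fun w : ℝ × ℝ × ℝ => show u w - (u (w.1, 0, w.2.2) - f w.2.2) =
    u (0, w.2.1, w.2.2) - u (0, 0, w.2.2) + f w.2.2 by linarith [hsep w.1 w.2.1 w.2.2]] at hB
  exact ⟨fun v => u (v.1, 0, v.2) - f v.2, fun v => u (0, v.1, v.2) - u (0, 0, v.2) + f v.2, hA,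
    hB, fun w => by linarith [hsep w.1 w.2.1 w.2.2]⟩

end IsLayeredEigen

/-! ### Squeezing a function of the height between two solutions -/

lemma SubexpGrowth.of_le_continuous {Z : ℝ} {v : ℝ × ℝ × ℝ → ℝ} {f : ℝ → ℝ} (hf : Continuous f)
    (h : ∀ w, v w ≤ f w.2.2) : SubexpGrowth Z v := by
  intro δ hδ
  obtain ⟨M, hM⟩ := (isCompact_Icc (a := -Z) (b := Z)).exists_bound_of_continuousOn hf.continuousOn
  refine ⟨|M|, fun w hw => ?_⟩
  calc v w ≤ f w.2.2 := h w
    _ ≤ |M| := ((le_abs_self _).trans (hM _ (abs_le.1 hw))).trans (le_abs_self M)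
    _ ≤ |M| * exp (δ * (|w.1| + |w.2.1|)) :=
      le_mul_of_one_le_right (abs_nonneg M) (one_le_exp (by positivity))

/-- The initial data `v` for which `heightSol k v` lies between `L` and `A` in the slab
`|z| ≤ Z`. -/
def heightSolsBetween (k : ℝ) (L A : ℝ × ℝ → ℝ) (Z : ℝ) : Set (ℝ × ℝ) :=
  {v | ∀ w : ℝ × ℝ, |w.2| ≤ Z → heightSol k v w.2 ∈ Icc (L w) (A w)}

section Between

variable {α β : ℝ → ℝ} {k Z Θ : ℝ} {L A : ℝ × ℝ → ℝ}

lemma heightSolsBetween_subset {Z' : ℝ} (h : Z ≤ Z') :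
    heightSolsBetween k L A Z' ⊆ heightSolsBetween k L A Z :=
  fun _ hv w hw => hv w (hw.trans h)

lemma isClosed_heightSolsBetween (k : ℝ) (L A : ℝ × ℝ → ℝ) (Z : ℝ) :
    IsClosed (heightSolsBetween k L A Z) := by
  simp only [heightSolsBetween, ofPred_forall]
  exact isClosed_iInter fun w => isClosed_iInter fun _ =>
    isClosed_Icc.preimage (continuous_heightSol_apply k w.2)

-- A solution is recovered from its values at `0` and `1`.
lemma isCompact_heightSolsBetween (k : ℝ) (L A : ℝ × ℝ → ℝ) (hZ : 1 ≤ Z) :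
    IsCompact (heightSolsBetween k L A Z) := by
  have hdata : Continuous fun e : ℝ × ℝ =>
      (e.1, (e.2 - e.1 * heightCosh k 1) / heightSinh k 1) := by fun_prop
  have hs := heightSinh_pos k one_pos
  refine (((isCompact_Icc (a := L (0, 0)) (b := A (0, 0))).prod
    (isCompact_Icc (a := L (0, 1)) (b := A (0, 1)))).image hdata).of_isClosed_subset
    (isClosed_heightSolsBetween k L A Z) fun v hv => ⟨(heightSol k v 0, heightSol k v 1),
      ⟨hv (0, 0) (by simp; linarith), hv (0, 1) (by simpa using hZ)⟩, ?_⟩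
  ext
  · simp [heightSol, heightCosh_zero, heightSinh_zero]
  · simp only [heightSol, heightCosh_zero, heightSinh_zero]
    field_simp
    ring

lemma heightSol_le_of_le_of_abs_eq (hZ : 0 < Z) (hE : EllipticOn Θ α β (Metric.closedBall 0 Z))
    (hk : 0 ≤ k) (hA : IsLayeredEigen α β k (fun w => A (w.1, w.2.2))) {f : ℝ → ℝ}
    (hf : Continuous f) (hfA : ∀ w, f w.2 ≤ A w) {v : ℝ × ℝ}
    (hbd : ∀ w : ℝ × ℝ, |w.2| = Z → heightSol k v w.2 ≤ A w) {w : ℝ × ℝ} (hw : |w.2| ≤ Z) :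
    heightSol k v w.2 ≤ A w :=
  sub_nonpos.1 <| ((isLayeredEigen_heightSol α β hk v).sub hA).nonpos_of_subexpGrowth hZ hE hk
    (.of_le_continuous ((continuous_heightSol k v).sub hf) fun w =>
      sub_le_sub_left (hfA (w.1, w.2.2)) _)
    (fun w hw => sub_nonpos.2 (hbd (w.1, w.2.2) hw)) (w := (w.1, 0, w.2)) hw

lemma nonempty_heightSolsBetween (hZ : 0 < Z) (hE : EllipticOn Θ α β (Metric.closedBall 0 Z))
    (hk : 0 ≤ k) (hL : IsLayeredEigen α β k (fun w => L (w.2.1, w.2.2)))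
    (hA : IsLayeredEigen α β k (fun w => A (w.1, w.2.2)))
    (hLA : ∀ x y z, L (y, z) ≤ A (x, z)) : (heightSolsBetween k L A Z).Nonempty := by
  have hbetween (z : ℝ) : ∃ g, (∀ y, L (y, z) ≤ g) ∧ ∀ x, g ≤ A (x, z) := by
    obtain ⟨g, hLg, hgA⟩ := exists_between_of_forall_le (range_nonempty fun y => L (y, z))
      (range_nonempty fun x => A (x, z)) (by rintro _ ⟨y, rfl⟩ _ ⟨x, rfl⟩; exact hLA x y z)
    exact ⟨g, fun y => hLg (mem_range_self y), fun x => hgA (mem_range_self x)⟩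
  obtain ⟨g, hLg, hgA⟩ := hbetween Z
  obtain ⟨g', hLg', hgA'⟩ := hbetween (-Z)
  obtain ⟨v, rfl, rfl⟩ := exists_heightSol_eq k hZ g g'
  have hA₀ : Continuous fun z => A (0, z) :=
    hA.contDiff.continuous.comp (f := fun z => (0, 0, z)) (by fun_prop)
  have hL₀ : Continuous fun z => L (0, z) :=
    hL.contDiff.continuous.comp (f := fun z => (0, 0, z)) (by fun_prop)
  refine ⟨v, fun w hw => ⟨?_, ?_⟩⟩
  · have h := heightSol_le_of_le_of_abs_eq (A := fun w => -1 * L w) (v := -v) hZ hE.swap hk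
      (hL.const_mul (-1)).swap hA₀.fun_neg (fun w => by linarith [hLA 0 w.1 w.2]) ?_ hw
    · linarith [heightSol_neg k v w.2]
    · rintro ⟨y, z⟩ hz
      rw [heightSol_neg]
      rcases eq_or_eq_neg_of_abs_eq hz with rfl | rfl
      · linarith [hLg y]
      · linarith [hLg' y]
  · refine heightSol_le_of_le_of_abs_eq hZ hE hk hA hL₀ (fun w => hLA w.1 0 w.2) ?_ hw
    rintro ⟨x, z⟩ hz
    rcases eq_or_eq_neg_of_abs_eq hz with rfl | rfl
    · exact hgA x
    · exact hgA' x

theorem exists_heightSol_between (hE : ∀ Z > 0, ∃ Θ, EllipticOn Θ α β (Metric.closedBall 0 Z))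
    (hk : 0 ≤ k) (hL : IsLayeredEigen α β k (fun w => L (w.2.1, w.2.2)))
    (hA : IsLayeredEigen α β k (fun w => A (w.1, w.2.2)))
    (hLA : ∀ x y z, L (y, z) ≤ A (x, z)) :
    ∃ v, ∀ w : ℝ × ℝ, heightSol k v w.2 ∈ Icc (L w) (A w) := by
  obtain ⟨v, hv⟩ := IsCompact.nonempty_iInter_of_sequence_nonempty_isCompact_isClosed
    (fun n : ℕ => heightSolsBetween k L A (n + 1))
    (fun n => heightSolsBetween_subset (by push_cast; linarith))
    (fun n => by
      obtain ⟨Θ, hΘ⟩ := hE (n + 1) n.cast_add_one_pos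
      exact nonempty_heightSolsBetween n.cast_add_one_pos hΘ hk hL hA hLA)
    (isCompact_heightSolsBetween k L A (by simp))
    (fun n => isClosed_heightSolsBetween k L A _)
  rw [mem_iInter] at hv
  refine ⟨v, fun w => ?_⟩
  obtain ⟨n, hn⟩ := exists_nat_ge |w.2|
  exact hv n w (hn.trans (by simp))

end Between

namespace IsDriftlessSolEigen

variable {p q k : ℝ} {u : ℝ × ℝ × ℝ → ℝ}

theorem exists_nonneg_add (hp : 0 < p) (hq : 0 < q) (hk : 0 ≤ k)
    (hu : IsDriftlessSolEigen p q k u) (hpos : ∀ w, 0 < u w) :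
    ∃ A B : ℝ × ℝ → ℝ, IsDriftlessSolEigen p q k (fun w => A (w.1, w.2.2)) ∧
      IsDriftlessSolEigen p q k (fun w => B (w.2.1, w.2.2)) ∧ (∀ v, 0 ≤ A v) ∧ (∀ v, 0 ≤ B v) ∧
      ∀ w, u w = A (w.1, w.2.2) + B (w.2.1, w.2.2) := by
  obtain ⟨A, B, hA, hB, hAB⟩ := hu.exists_add_of_mixedDiff_eq_zero (by fun_prop) hk
    (mixedDiff_eq_zero hp hq hk hu hpos)
  obtain ⟨v, hv⟩ := exists_heightSol_between (L := fun w => -1 * B w)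
    (fun Z hZ => ⟨_, ellipticOn_exp hp.le hq.le hZ.le⟩) hk (hB.const_mul (-1)) hA
    fun x y z => by linarith [hAB (x, y, z), hpos (x, y, z)]
  have hψ := isLayeredEigen_heightSol (fun z => exp (2 * p * z)) (fun z => exp (-(2 * q * z))) hk v
  exact ⟨fun w => A w - heightSol k v w.2, fun w => B w + heightSol k v w.2, hA.sub hψ, hB.add hψ,
    fun w => sub_nonneg.2 (hv w).2, fun w => by linarith [(hv w).1],
    fun w => by rw [hAB]; ring⟩

lemma flip (hu : IsDriftlessSolEigen p q k u) :
    IsDriftlessSolEigen q p k (fun w => u (w.2.1, w.1, -w.2.2)) := by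
  simpa using hu.swap.comp_affine 0 0 0 1 1 (-1) (by simp) (by simp)

end IsDriftlessSolEigen

/-! ### Conjugation by `e^{az}` -/

lemma hasDerivAt_exp_mul_mul {f : ℝ → ℝ} {f' c t : ℝ} (hf : HasDerivAt f f' t) :
    HasDerivAt (fun t => exp (c * t) * f t) (exp (c * t) * (f' + c * f t)) t := by
  have h : HasDerivAt (fun t => c * t) c t := by simpa using (hasDerivAt_id t).const_mul c
  exact (h.exp.fun_mul hf).congr_deriv (by ring)

lemma iteratedDeriv_two_exp_mul_mul {f : ℝ → ℝ} (hf : ContDiff ℝ 2 f) (c t : ℝ) :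
    iteratedDeriv 2 (fun t => exp (c * t) * f t) t =
      exp (c * t) * (iteratedDeriv 2 f t + 2 * c * deriv f t + c ^ 2 * f t) := by
  have h₁ (t : ℝ) : HasDerivAt f (deriv f t) t := (hf.differentiable two_ne_zero t).hasDerivAt
  have h₂ := hasDerivAt_deriv_of_contDiff_two hf t
  refine iteratedDeriv_two_eq_of_hasDerivAt (fun s => hasDerivAt_exp_mul_mul (h₁ s)) ?_
  exact (hasDerivAt_exp_mul_mul (h₂.fun_add ((h₁ t).const_mul c))).congr_deriv (by ring)

namespace IsDriftlessSolEigen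

variable {p q a lam : ℝ} {A : ℝ × ℝ → ℝ}

lemma of_solLap_eq {h : ℝ × ℝ × ℝ → ℝ} (hC : ContDiff ℝ 2 h)
    (heig : ∀ w, solLap p q a h w = lam * h w) :
    IsDriftlessSolEigen p q (2 * lam + a ^ 2) (fun w => exp (a * w.2.2) * h w) := by
  refine ⟨by fun_prop, fun w => ?_⟩
  have heq := heig w
  simp only [solLap] at heq
  simp only [layeredLaplacian, iteratedDeriv_const_mul_field]
  rw [iteratedDeriv_two_exp_mul_mul (f := fun t => h (w.1, w.2.1, t)) (by fun_prop)]
  linear_combination 2 * exp (a * w.2.2) * heq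

lemma contDiff_exp_mul {k : ℝ} (hA : IsDriftlessSolEigen p q k (fun w => A (w.1, w.2.2))) (a : ℝ) :
    ContDiff ℝ 2 (fun v => exp (-a * v.2) * A v) := by
  have hAC : ContDiff ℝ 2 A := hA.contDiff.comp (f := fun v : ℝ × ℝ => (v.1, 0, v.2)) (by fun_prop)
  fun_prop

lemma hypLap_exp_mul (hA : IsDriftlessSolEigen p q (2 * lam + a ^ 2) (fun w => A (w.1, w.2.2)))
    (v : ℝ × ℝ) : hypLap p a (fun v => exp (-a * v.2) * A v) v = lam * (exp (-a * v.2) * A v) := by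
  have heq := hA.eq (v.1, 0, v.2)
  simp only [layeredLaplacian, iteratedDeriv_const, OfNat.ofNat_ne_zero, if_false] at heq
  have hline : ContDiff ℝ 2 fun t => A (v.1, t) :=
    hA.contDiff.comp (f := fun t => (v.1, 0, t)) (by fun_prop)
  simp only [hypLap, iteratedDeriv_const_mul_field]
  rw [iteratedDeriv_two_exp_mul_mul hline,
    (hasDerivAt_exp_mul_mul (hline.differentiable two_ne_zero v.2).hasDerivAt).deriv]
  linear_combination 1 / 2 * exp (-a * v.2) * heq

end IsDriftlessSolEigen

theorem positive_eigenfunction_decomposition (p q a lam : ℝ) (hp : 0 < p) (hq : 0 < q)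
    (hlam : -a^2/2 ≤ lam) (h : ℝ × ℝ × ℝ → ℝ) (hC : ContDiff ℝ 2 h)
    (hpos : ∀ w, 0 < h w) (heig : ∀ w, solLap p q a h w = lam * h w) :
    ∃ h₁ h₂ : ℝ × ℝ → ℝ,
      ContDiff ℝ 2 h₁ ∧ ContDiff ℝ 2 h₂ ∧
      (∀ u, 0 ≤ h₁ u) ∧ (∀ u, 0 ≤ h₂ u) ∧
      (∀ u, hypLap p a h₁ u = lam * h₁ u) ∧
      (∀ u, hypLap q (-a) h₂ u = lam * h₂ u) ∧
      ∀ w : ℝ × ℝ × ℝ, h w = h₁ (w.1, w.2.2) + h₂ (w.2.1, -w.2.2) := by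
  obtain ⟨A, B, hA, hB, hA₀, hB₀, hAB⟩ :=
    (IsDriftlessSolEigen.of_solLap_eq hC heig).exists_nonneg_add hp hq (by linarith)
      fun w => mul_pos (exp_pos _) (hpos w)
  have hB' : IsDriftlessSolEigen q p (2 * lam + (-a) ^ 2) (fun w => B (w.1, -w.2.2)) := by
    rw [neg_sq]
    exact hB.flip
  refine ⟨fun v => exp (-a * v.2) * A v, fun v => exp (-(-a) * v.2) * B (v.1, -v.2),
    hA.contDiff_exp_mul a,
    IsDriftlessSolEigen.contDiff_exp_mul (A := fun v => B (v.1, -v.2)) hB' (-a),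
    fun v => mul_nonneg (exp_pos _).le (hA₀ _), fun v => mul_nonneg (exp_pos _).le (hB₀ _),
    hA.hypLap_exp_mul,
    IsDriftlessSolEigen.hypLap_exp_mul (A := fun v => B (v.1, -v.2)) hB', fun w => ?_⟩
  have hexp : exp (-a * w.2.2) * exp (a * w.2.2) = 1 := by rw [← exp_add]; simp
  simp only [neg_neg, mul_neg, ← neg_mul, ← mul_add, ← hAB, ← mul_assoc, hexp, one_mul]
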